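/- arXiv:2003.08581 — 3 statements merged into one kernel-verified Lean document; each statement's English description precedes it below -/
import Mathlib

section
/- Suppose ν₁, ν₂ are non-negative random variables on (Ω,𝓕,ℙ), Λ₁ ≤ Λ₂ are random variables with ℙ(0 < Λ₁ ≤ Λ₂ < ∞) = 1, and for ℙ-a.e. ω ∈ Ω one has Λ₁(τ_x ω)Λ₁(τ_y ω) ≤ ν₁(τ_x ω)ν₂(τ_y ω) + ν₁(τ_y ω)ν₂(τ_x ω) ≤ Λ₂(τ_x ω)Λ₂(τ_y ω) for all x,y ∈ ℝ^d. Then there is a constant C > 0 such that ν₁(ω) ≤ C·Λ₂(ω) and ν₂(ω) ≤ C·Λ₂(ω) for ℙ-a.e. ω. -/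
open MeasureTheory Filter Metric Set
open scoped ENNReal Topology

noncomputable section

/-- Euclidean space `ℝ^d`. -/
abbrev Rd (d : ℕ) : Type := EuclideanSpace ℝ (Fin d)

/-!
Taking `x = 0` in the upper bound and dropping one nonnegative term gives
`ν₁(ω) ν₂(τ_y ω) ≤ Λ₂(ω) Λ₂(τ_y ω)`. The lower bound at `x = y = 0` makes `ν₂` positive, so for
large `C` the event `Λ₂ ≤ C ν₂` has positive probability, and by ergodicity almost every orbit
visits it. At a visit `y` the bound becomes `ν₁(ω) Λ₂(τ_y ω) ≤ C Λ₂(ω) Λ₂(τ_y ω)`, and the positive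
factor `Λ₂(τ_y ω)` cancels; `ν₂` is symmetric.

As `ℝ^d` is uncountable, almost sure statements cannot be intersected over it. Fubini replaces this:
`{ω | τ_x ω ∈ s for almost every x}` is measurable and strictly invariant.
-/

theorem exists_pos_frequently_le_const_mul {α : Type*} {l : Filter α} [l.NeBot]
    [CountableInterFilter l] {f g : α → ℝ} (hg : ∀ᶠ a in l, 0 < g a) :
    ∃ C : ℝ, 0 < C ∧ ∃ᶠ a in l, f a ≤ C * g a := by
  by_contra! h
  have hlt : ∀ᶠ a in l, ∀ n : ℕ, (n + 1 : ℝ) * g a < f a :=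
    eventually_countable_forall.2 fun n => h (n + 1) n.cast_add_one_pos
  obtain ⟨a, hga, ha⟩ := (hg.and hlt).exists
  obtain ⟨n, hn⟩ := exists_nat_ge (f a / g a)
  have hle : f a ≤ n * g a := (div_le_iff₀ hga).1 hn
  linarith [ha n]

theorem pos_and_pos_of_mul_self_le {a b c : ℝ} (ha : 0 ≤ a) (hb : 0 ≤ b) (hc : c ≠ 0)
    (h : c * c ≤ a * b + a * b) : 0 < a ∧ 0 < b := by
  have hmul : 0 < a * b := by linarith [mul_self_pos.2 hc]
  exact ⟨pos_of_mul_pos_left hmul hb, pos_of_mul_pos_right hmul ha⟩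

section ErgodicAction

variable {G Ω : Type*} [AddGroup G] [MeasurableSpace G] [AddAction G Ω] (μ : Measure G)

theorem preimage_vadd_setOf_ae_vadd_mem [MeasurableAdd G] [μ.IsAddRightInvariant]
    (s : Set Ω) (g : G) :
    (g +ᵥ ·) ⁻¹' {ω | ∀ᵐ x ∂μ, x +ᵥ ω ∈ s} = {ω | ∀ᵐ x ∂μ, x +ᵥ ω ∈ s} := by
  ext ω
  simpa only [mem_preimage, mem_ofPred_eq, vadd_vadd] using
    eventually_add_right_iff μ g (p := fun x => x +ᵥ ω ∈ s)

variable [MeasurableSpace Ω] [MeasurableVAdd₂ G Ω] [SFinite μ]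

theorem measurableSet_setOf_ae_vadd_mem {s : Set Ω} (hs : MeasurableSet s) :
    MeasurableSet {ω | ∀ᵐ x ∂μ, x +ᵥ ω ∈ s} :=
  measurable_measure_prodMk_right (measurable_vadd hs.compl) (measurableSet_singleton 0)

variable {ℙ : Measure Ω} [SFinite ℙ]

theorem ae_mem_of_ae_ae_vadd_mem [NeZero μ] [VAddInvariantMeasure G Ω ℙ] {s : Set Ω}
    (hs : MeasurableSet s) (h : ∀ᵐ ω ∂ℙ, ∀ᵐ x ∂μ, x +ᵥ ω ∈ s) : ∀ᵐ ω ∂ℙ, ω ∈ s := by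
  have hmeas : MeasurableSet {p : G × Ω | p.1 +ᵥ p.2 ∈ s} := measurable_vadd hs
  obtain ⟨x, hx⟩ : ∃ x : G, ∀ᵐ ω ∂ℙ, x +ᵥ ω ∈ s := ((Measure.ae_ae_comm hmeas).2 h).exists
  filter_upwards [tendsto_vadd_ae ℙ (-x) hx] with ω hω
  simpa only [mem_preimage, mem_ofPred_eq, vadd_neg_vadd] using hω

theorem ae_ae_vadd_of_ae [VAddInvariantMeasure G Ω ℙ] {p : Ω → Prop} (h : ∀ᵐ ω ∂ℙ, p ω) :
    ∀ᵐ ω ∂ℙ, ∀ᵐ x ∂μ, p (x +ᵥ ω) := by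
  obtain ⟨s, hsae, hs, hsp⟩ := h.exists_measurable_mem
  have hmeas : MeasurableSet {q : G × Ω | q.1 +ᵥ q.2 ∈ s} := measurable_vadd hs
  have hmem : ∀ᵐ ω ∂ℙ, ∀ᵐ x ∂μ, x +ᵥ ω ∈ s :=
    (Measure.ae_ae_comm hmeas).1 (ae_of_all _ fun x => tendsto_vadd_ae ℙ x hsae)
  exact hmem.mono fun _ hω => hω.mono fun x => hsp (x +ᵥ _)

variable [MeasurableAdd G] [NeZero μ] [μ.IsAddRightInvariant]

include μ in
theorem ergodicVAdd_of_forall_preimage_vadd_eq [VAddInvariantMeasure G Ω ℙ]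
    (h : ∀ s : Set Ω, MeasurableSet s → (∀ g : G, (g +ᵥ ·) ⁻¹' s = s) →
      EventuallyConst s (ae ℙ)) :
    ErgodicVAdd G Ω ℙ where
  aeconst_of_forall_preimage_vadd_ae_eq {s} hs hinv := by
    have hmeas : MeasurableSet {p : G × Ω | p.1 +ᵥ p.2 ∈ s ↔ p.2 ∈ s} :=
      (measurable_vadd hs).iff (measurable_snd hs)
    have hconst : ∀ᵐ ω ∂ℙ, ∀ᵐ x ∂μ, (x +ᵥ ω ∈ s ↔ ω ∈ s) :=
      (Measure.ae_ae_comm hmeas).1 (ae_of_all _ fun x => (hinv x).mem_iff)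
    have heq : {ω | ∀ᵐ x ∂μ, x +ᵥ ω ∈ s} =ᵐ[ℙ] s := by
      filter_upwards [hconst] with ω hω
      exact propext ((eventually_congr hω).trans eventually_const)
    exact (h _ (measurableSet_setOf_ae_vadd_mem μ hs)
      (preimage_vadd_setOf_ae_vadd_mem μ s)).congr heq

theorem ae_frequently_vadd_of_frequently [ErgodicVAdd G Ω ℙ] {p : Ω → Prop}
    (hp : NullMeasurableSet {ω | p ω} ℙ) (h : ∃ᵐ ω ∂ℙ, p ω) :
    ∀ᵐ ω ∂ℙ, ∃ᵐ x ∂μ, p (x +ᵥ ω) := by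
  obtain ⟨s, hsp, hs, heq⟩ := hp.exists_measurable_subset_ae_eq
  have hconst : EventuallyConst {ω | ∀ᵐ x ∂μ, x +ᵥ ω ∈ sᶜ} (ae ℙ) :=
    aeconst_of_forall_preimage_vadd_ae_eq G
      (measurableSet_setOf_ae_vadd_mem μ hs.compl).nullMeasurableSet
      fun g => .of_eq (preimage_vadd_setOf_ae_vadd_mem μ sᶜ g)
  rcases eventuallyConst_set.1 hconst with havoid | hmeet
  · have hnotMem : ∀ᵐ ω ∂ℙ, ω ∉ s := ae_mem_of_ae_ae_vadd_mem μ hs.compl havoid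
    exact absurd (hnotMem.congr (heq.mem_iff.mono fun _ => not_congr)) h
  · filter_upwards [hmeet] with ω hω
    have hvisit : ∃ᵐ x ∂μ, x +ᵥ ω ∈ s := hω
    exact hvisit.mono fun _ hx => hsp hx

theorem ae_le_const_mul_of_ae_mul_vadd_le [ErgodicVAdd G Ω ℙ] {f g L : Ω → ℝ} {C : ℝ}
    (hg : AEMeasurable g ℙ) (hL : AEMeasurable L ℙ) (hf : ∀ᵐ ω ∂ℙ, 0 ≤ f ω)
    (hLpos : ∀ᵐ ω ∂ℙ, 0 < L ω) (hC : 0 ≤ C) (hfreq : ∃ᵐ ω ∂ℙ, L ω ≤ C * g ω)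
    (hbound : ∀ᵐ ω ∂ℙ, ∀ᵐ x ∂μ, f ω * g (x +ᵥ ω) ≤ L ω * L (x +ᵥ ω)) :
    ∀ᵐ ω ∂ℙ, f ω ≤ C * L ω := by
  have hvisit : ∀ᵐ ω ∂ℙ, ∃ᵐ x ∂μ, L (x +ᵥ ω) ≤ C * g (x +ᵥ ω) :=
    ae_frequently_vadd_of_frequently μ (p := fun ω => L ω ≤ C * g ω)
      (nullMeasurableSet_le hL (hg.const_mul C)) hfreq
  filter_upwards [hvisit, ae_ae_vadd_of_ae μ hLpos, hbound, hf] with ω hω hωpos hωbound hfω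
  obtain ⟨x, hLg, hLx, hfg⟩ := (hω.and_eventually (hωpos.and hωbound)).exists
  refine le_of_mul_le_mul_right ?_ hLx
  calc f ω * L (x +ᵥ ω) ≤ f ω * (C * g (x +ᵥ ω)) := by gcongr
    _ = C * (f ω * g (x +ᵥ ω)) := by ring
    _ ≤ C * (L ω * L (x +ᵥ ω)) := by gcongr
    _ = C * L ω * L (x +ᵥ ω) := by ring

end ErgodicAction

theorem nu_dominated_by_Lambda_general
    {G Ω : Type*} [AddGroup G] [MeasurableSpace G] [MeasurableAdd G]
    (μ : Measure G) [SFinite μ] [NeZero μ] [μ.IsAddRightInvariant]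
    [MeasurableSpace Ω] [AddAction G Ω] [MeasurableVAdd₂ G Ω]
    (ℙ : Measure Ω) [SFinite ℙ] [ErgodicVAdd G Ω ℙ] {ν₁ ν₂ Λ : Ω → ℝ}
    (hν₁ : AEMeasurable ν₁ ℙ) (hν₂ : AEMeasurable ν₂ ℙ) (hΛ : AEMeasurable Λ ℙ)
    (hν₁pos : ∀ᵐ ω ∂ℙ, 0 < ν₁ ω) (hν₂pos : ∀ᵐ ω ∂ℙ, 0 < ν₂ ω) (hΛpos : ∀ᵐ ω ∂ℙ, 0 < Λ ω)
    (hbound : ∀ᵐ ω ∂ℙ, ∀ᵐ x ∂μ,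
      ν₁ ω * ν₂ (x +ᵥ ω) + ν₁ (x +ᵥ ω) * ν₂ ω ≤ Λ ω * Λ (x +ᵥ ω)) :
    ∃ C : ℝ, 0 < C ∧ ∀ᵐ ω ∂ℙ, ν₁ ω ≤ C * Λ ω ∧ ν₂ ω ≤ C * Λ ω := by
  rcases eq_zero_or_neZero ℙ with rfl | _
  · exact ⟨1, one_pos, by simp⟩
  obtain ⟨C, hC, hmin⟩ : ∃ C : ℝ, 0 < C ∧ ∃ᵐ ω ∂ℙ, Λ ω ≤ C * min (ν₁ ω) (ν₂ ω) :=
    exists_pos_frequently_le_const_mul <| by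
      filter_upwards [hν₁pos, hν₂pos] with ω using lt_min
  have hfreq₁ : ∃ᵐ ω ∂ℙ, Λ ω ≤ C * ν₁ ω :=
    hmin.mono fun ω hω => hω.trans (by gcongr; exact min_le_left _ _)
  have hfreq₂ : ∃ᵐ ω ∂ℙ, Λ ω ≤ C * ν₂ ω :=
    hmin.mono fun ω hω => hω.trans (by gcongr; exact min_le_right _ _)
  have hdrop : ∀ᵐ ω ∂ℙ, ∀ᵐ x ∂μ, ν₁ ω * ν₂ (x +ᵥ ω) ≤ Λ ω * Λ (x +ᵥ ω) ∧
      ν₂ ω * ν₁ (x +ᵥ ω) ≤ Λ ω * Λ (x +ᵥ ω) := by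
    filter_upwards [hbound, hν₁pos, hν₂pos, ae_ae_vadd_of_ae μ (hν₁pos.and hν₂pos)]
      with ω hω h₁ h₂ hωpos
    filter_upwards [hω, hωpos] with x hx ⟨hx₁, hx₂⟩
    constructor <;> linarith [mul_pos h₁ hx₂, mul_pos h₂ hx₁]
  have hle₁ : ∀ᵐ ω ∂ℙ, ν₁ ω ≤ C * Λ ω :=
    ae_le_const_mul_of_ae_mul_vadd_le μ hν₂ hΛ (hν₁pos.mono fun _ => le_of_lt) hΛpos hC.le hfreq₂
      (hdrop.mono fun _ hω => hω.mono fun _ => And.left)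
  have hle₂ : ∀ᵐ ω ∂ℙ, ν₂ ω ≤ C * Λ ω :=
    ae_le_const_mul_of_ae_mul_vadd_le μ hν₁ hΛ (hν₂pos.mono fun _ => le_of_lt) hΛpos hC.le hfreq₁
      (hdrop.mono fun _ hω => hω.mono fun _ => And.right)
  exact ⟨C, hC, hle₁.and hle₂⟩

/-- If the product-form coefficient `ν₁(τ_x ω)ν₂(τ_y ω) + ν₁(τ_y ω)ν₂(τ_x ω)` is
bounded between `Λ₁(τ_x ω)Λ₁(τ_y ω)` and `Λ₂(τ_x ω)Λ₂(τ_y ω)` with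
`ℙ(0 < Λ₁ ≤ Λ₂ < ∞) = 1`, then `ν₁` and `ν₂` are a.s. dominated by a constant
multiple of `Λ₂` (ergodicity of the environment is used here). -/
theorem nu_dominated_by_Lambda
    {Ω : Type*} [MeasurableSpace Ω] (ℙ : Measure Ω) [IsProbabilityMeasure ℙ]
    (d : ℕ) (hd : 0 < d)
    -- the stationary ergodic group of transformations
    (τ : Rd d → Ω → Ω)
    (hτ0 : τ 0 = id)
    (hτadd : ∀ x y, τ x ∘ τ y = τ (x + y))
    (hτmeas : Measurable fun p : Rd d × Ω => τ p.1 p.2)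
    (hτstat : ∀ x, MeasurePreserving (τ x) ℙ ℙ)
    (hτerg : ∀ A : Set Ω, MeasurableSet A → (∀ x, τ x ⁻¹' A = A) → ℙ A = 0 ∨ ℙ A = 1)
    -- the nonnegative random variables ν₁, ν₂ and the bounds Λ₁ ≤ Λ₂
    (ν₁ ν₂ : Ω → ℝ) (hν₁meas : Measurable ν₁) (hν₂meas : Measurable ν₂)
    (hν₁nn : ∀ ω, 0 ≤ ν₁ ω) (hν₂nn : ∀ ω, 0 ≤ ν₂ ω)
    (Λ₁ Λ₂ : Ω → ℝ) (hΛmeas₁ : Measurable Λ₁) (hΛmeas₂ : Measurable Λ₂)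
    (hΛ : ∀ᵐ ω ∂ℙ, 0 < Λ₁ ω ∧ Λ₁ ω ≤ Λ₂ ω)
    (hbound : ∀ᵐ ω ∂ℙ, ∀ x y : Rd d,
      Λ₁ (τ x ω) * Λ₁ (τ y ω)
          ≤ ν₁ (τ x ω) * ν₂ (τ y ω) + ν₁ (τ y ω) * ν₂ (τ x ω) ∧
      ν₁ (τ x ω) * ν₂ (τ y ω) + ν₁ (τ y ω) * ν₂ (τ x ω)
          ≤ Λ₂ (τ x ω) * Λ₂ (τ y ω)) :
    ∃ C : ℝ, 0 < C ∧ ∀ᵐ ω ∂ℙ, ν₁ ω ≤ C * Λ₂ ω ∧ ν₂ ω ≤ C * Λ₂ ω := by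
  let _ : AddAction (Rd d) Ω :=
    { vadd := τ
      zero_vadd := congrFun hτ0
      add_vadd := fun x y ω => (congrFun (hτadd x y) ω).symm }
  have : MeasurableVAdd₂ (Rd d) Ω := ⟨hτmeas⟩
  have : VAddInvariantMeasure (Rd d) Ω ℙ :=
    ⟨fun x _ hs => (hτstat x).measure_preimage hs.nullMeasurableSet⟩
  have : ErgodicVAdd (Rd d) Ω ℙ :=
    ergodicVAdd_of_forall_preimage_vadd_eq volume fun s hs hinv =>
      eventuallyConst_set.2 <| (hτerg s hs hinv).symm.imp
        (mem_ae_iff_prob_eq_one hs).2 measure_eq_zero_iff_ae_notMem.1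
  have hνpos : ∀ᵐ ω ∂ℙ, 0 < ν₁ ω ∧ 0 < ν₂ ω := by
    filter_upwards [hΛ, hbound] with ω ⟨hΛ₁, _⟩ hω
    refine pos_and_pos_of_mul_self_le (hν₁nn ω) (hν₂nn ω) hΛ₁.ne' ?_
    simpa only [hτ0, id] using (hω 0 0).1
  have hupper : ∀ᵐ ω ∂ℙ, ∀ y, ν₁ ω * ν₂ (τ y ω) + ν₁ (τ y ω) * ν₂ ω ≤ Λ₂ ω * Λ₂ (τ y ω) :=
    hbound.mono fun ω hω y => by simpa only [hτ0, id] using (hω 0 y).2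
  exact nu_dominated_by_Lambda_general volume ℙ hν₁meas.aemeasurable hν₂meas.aemeasurable
    hΛmeas₂.aemeasurable (hνpos.mono fun _ => And.left) (hνpos.mono fun _ => And.right)
    (hΛ.mono fun _ hω => hω.1.trans_le hω.2) (hupper.mono fun _ => ae_of_all _)

end
end

section
/- There exists a constant c₀ > 0 (depending only on d, α and Γ) such that for all f ∈ C_c¹(ℝ^d): ‖f‖²_{L²(ℝ^d;dx)} ≤ c₀ · E₀(f,f)^{d/(d+α)} · ‖f‖_{L¹(ℝ^d;dx)}^{2α/(d+α)}. -/
open MeasureTheory Filter Metric Set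
open scoped ENNReal Topology

noncomputable section

/-!
Fix a bounded measurable set `U ⊆ Γ` of positive measure and let `B = r • U`, which still lies in
the cone. Whenever `x - y ∈ B`,
`‖f y‖² ≤ ‖f y - f x‖² + 2 ‖f x‖ ‖f y‖`, and `‖x - y‖ ≤ r R`, so the first term is at most
`(r R)^(d+α)` times the integrand of the energy. Integrating over all such pairs gives
`r^d μ(U) ‖f‖₂² ≤ (r R)^(d+α) E₀(f,f) + 2 ‖f‖₁²`. Dividing by `r^d μ(U)` and optimising over
`r > 0` yields the inequality. For Lipschitz `f` with compact support the energy is finite because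
`min(‖h‖², 1) ‖h‖^(-(d+α))` is integrable when `0 < α < 2`.
-/

open Module (finrank)
open scoped Pointwise

section Optimization

theorem le_two_mul_rpow_mul_rpow_of_forall_le_of_pos {A a b s t : ℝ} (hs : 0 < s) (ht : 0 < t)
    (ha : 0 < a) (hb : 0 < b) (h : ∀ r : ℝ, 0 < r → A ≤ r ^ s * a + r ^ (-t) * b) :
    A ≤ 2 * (a ^ (t / (t + s)) * b ^ (s / (t + s))) := by
  -- At this `r` the two summands agree.
  set r := (b / a) ^ (1 / (t + s)) with hr
  have hrpow (q : ℝ) : r ^ q = b ^ (q / (t + s)) * a ^ (-(q / (t + s))) := by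
    rw [hr, ← Real.rpow_mul (by positivity), one_div_mul_eq_div, Real.div_rpow hb.le ha.le,
      Real.rpow_neg ha.le, div_eq_mul_inv]
  have hleft : r ^ s * a = a ^ (t / (t + s)) * b ^ (s / (t + s)) := by
    rw [hrpow, mul_assoc, ← Real.rpow_add_one ha.ne', mul_comm]
    congr 2
    field_simp
    ring
  have hright : r ^ (-t) * b = a ^ (t / (t + s)) * b ^ (s / (t + s)) := by
    rw [hrpow, mul_right_comm, ← Real.rpow_add_one hb.ne', mul_comm]
    congr 2
    · ring
    · field_simp
      ring
  linarith [h r (by positivity)]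

theorem le_two_mul_rpow_mul_rpow_of_forall_le {A a b s t : ℝ} (hs : 0 < s) (ht : 0 < t) (ha : 0 ≤ a)
    (hb : 0 ≤ b) (h : ∀ r : ℝ, 0 < r → A ≤ r ^ s * a + r ^ (-t) * b) :
    A ≤ 2 * (a ^ (t / (t + s)) * b ^ (s / (t + s))) := by
  have hperturbed (ε : ℝ) (hε : 0 < ε) :
      A ≤ 2 * ((a + ε) ^ (t / (t + s)) * (b + ε) ^ (s / (t + s))) := by
    refine le_two_mul_rpow_mul_rpow_of_forall_le_of_pos hs ht (by positivity) (by positivity)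
      fun r hr => ?_
    refine (h r hr).trans ?_
    gcongr <;> linarith
  have hcont : Continuous fun ε : ℝ =>
      2 * ((a + ε) ^ (t / (t + s)) * (b + ε) ^ (s / (t + s))) :=
    continuous_const.mul <|
      ((continuous_const.add continuous_id).rpow_const fun _ => .inr (by positivity)).mul
        ((continuous_const.add continuous_id).rpow_const fun _ => .inr (by positivity))
  have hlim := (hcont.tendsto 0).mono_left (nhdsWithin_le_nhds (s := Ioi 0))
  simp only [add_zero] at hlim
  exact ge_of_tendsto hlim (eventually_mem_nhdsWithin.mono hperturbed)

end Optimization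

section Translation

variable {G : Type*} [MeasurableSpace G] [AddGroup G] [MeasurableAdd₂ G] [MeasurableNeg G]
  {μ ν : Measure G} [SFinite μ] [SFinite ν] [μ.IsAddRightInvariant]

theorem lintegral_prod_indicator_sub_mul {B : Set G} (hB : MeasurableSet B) {g : G → ℝ≥0∞}
    (hg : AEMeasurable g ν) :
    ∫⁻ p : G × G, B.indicator 1 (p.1 - p.2) * g p.2 ∂(μ.prod ν) = μ B * ∫⁻ y, g y ∂ν := by
  have hshear := measurePreserving_sub_prod μ ν
  have hind : AEMeasurable (B.indicator (1 : G → ℝ≥0∞)) μ :=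
    (measurable_one.indicator hB).aemeasurable
  have hprod : AEMeasurable (fun p : G × G => B.indicator 1 p.1 * g p.2) (μ.prod ν) :=
    hind.comp_fst.mul hg.comp_snd
  rw [← lintegral_indicator_one hB, ← lintegral_prod_mul hind hg]
  nth_rw 2 [← hshear.map_eq]
  rw [lintegral_map' (by rwa [hshear.map_eq]) hshear.aemeasurable]

end Translation

section Energy

variable {E F : Type*} [NormedAddCommGroup E] [NormedAddCommGroup F]

/-- The integrand `‖f y - f x‖² 1_Γ(x - y) / ‖y - x‖ ^ s` at `p = (x, y)` of the Dirichlet form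
`E₀(f, f)`, with `s` in the role of `d + α`. It vanishes on the diagonal because its numerator does,
so the diagonal need not be removed from the domain of integration. -/
def coneEnergyDensity (Γ : Set E) (s : ℝ) (f : E → F) (p : E × E) : ℝ :=
  ‖f p.2 - f p.1‖ ^ 2 * Γ.indicator (fun _ => (1 : ℝ)) (p.1 - p.2) / ‖p.2 - p.1‖ ^ s

/-- The Dirichlet form `E₀(f, f)` of the cone `Γ` with kernel `‖y - x‖ ^ (-s)`, as a Bochner
integral: it is `0` by convention when `coneEnergyDensity Γ s f` is not integrable. -/
def coneEnergy [MeasurableSpace E] (μ : Measure E) (Γ : Set E) (s : ℝ) (f : E → F) : ℝ :=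
  ∫ p, coneEnergyDensity Γ s f p ∂(μ.prod μ)

theorem coneEnergyDensity_nonneg (Γ : Set E) (s : ℝ) (f : E → F) (p : E × E) :
    0 ≤ coneEnergyDensity Γ s f p :=
  div_nonneg (mul_nonneg (sq_nonneg _) (indicator_nonneg (fun _ _ => zero_le_one) _))
    (Real.rpow_nonneg (norm_nonneg _) _)

theorem coneEnergyDensity_le (Γ : Set E) (s : ℝ) (f : E → F) (p : E × E) :
    coneEnergyDensity Γ s f p ≤ ‖f p.2 - f p.1‖ ^ 2 / ‖p.2 - p.1‖ ^ s :=
  div_le_div_of_nonneg_right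
    (mul_le_of_le_one_right (sq_nonneg _) (indicator_le_self' (fun _ _ => zero_le_one) _))
    (Real.rpow_nonneg (norm_nonneg _) _)

theorem coneEnergy_nonneg [MeasurableSpace E] (μ : Measure E) (Γ : Set E) (s : ℝ) (f : E → F) :
    0 ≤ coneEnergy μ Γ s f :=
  integral_nonneg (coneEnergyDensity_nonneg Γ s f)

theorem norm_sub_sq_le_rpow_mul_coneEnergyDensity {Γ : Set E} {s ρ : ℝ} (hs : 0 ≤ s) (f : E → F)
    {x y : E} (hΓ : x - y ∈ Γ) (hρ : ‖x - y‖ ≤ ρ) :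
    ‖f y - f x‖ ^ 2 ≤ ρ ^ s * coneEnergyDensity Γ s f (x, y) := by
  rw [coneEnergyDensity, indicator_of_mem hΓ, mul_one]
  rcases eq_or_ne y x with rfl | hxy
  · simp
  have hpos : 0 < ‖y - x‖ ^ s := Real.rpow_pos_of_pos (norm_sub_pos_iff.2 hxy) s
  rw [← mul_div_assoc, le_div_iff₀ hpos, mul_comm]
  gcongr
  rwa [norm_sub_rev]

theorem norm_sq_le_norm_sub_sq_add (a b : F) : ‖b‖ ^ 2 ≤ ‖b - a‖ ^ 2 + 2 * (‖a‖ * ‖b‖) := by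
  have hdiff : (‖b‖ - ‖a‖) ^ 2 ≤ ‖b - a‖ ^ 2 := sq_le_sq.2 <| by
    simpa only [abs_norm] using abs_norm_sub_norm_le b a
  nlinarith [sq_nonneg ‖a‖]

theorem indicator_mul_norm_sq_le {Γ B : Set E} {s ρ : ℝ} (hs : 0 ≤ s) (hρ0 : 0 ≤ ρ)
    (hBΓ : B ⊆ Γ) (hBρ : ∀ h ∈ B, ‖h‖ ≤ ρ) (f : E → F) (p : E × E) :
    B.indicator 1 (p.1 - p.2) * ‖f p.2‖ ^ 2 ≤
      ρ ^ s * coneEnergyDensity Γ s f p + 2 * (‖f p.1‖ * ‖f p.2‖) := by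
  by_cases hp : p.1 - p.2 ∈ B
  · rw [indicator_of_mem hp, Pi.one_apply, one_mul]
    exact (norm_sq_le_norm_sub_sq_add (f p.1) (f p.2)).trans <| by
      gcongr
      exact norm_sub_sq_le_rpow_mul_coneEnergyDensity hs f (hBΓ hp) (hBρ _ hp)
  · rw [indicator_of_notMem hp, zero_mul]
    have := coneEnergyDensity_nonneg Γ s f p
    positivity

end Energy

section FiniteEnergy

variable {E F : Type*} [NormedAddCommGroup E] [NormedAddCommGroup F]

theorem integrableOn_Ioc_pow_smul_min_sq_one_div_rpow {α : ℝ} (hα : α < 2) {n : ℕ} (hn : 0 < n) :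
    IntegrableOn (fun t : ℝ => t ^ (n - 1) • (min (t ^ 2) 1 / t ^ (n + α))) (Ioc 0 1) := by
  have hpow : IntegrableOn (fun t : ℝ => t ^ (1 - α)) (Ioc 0 1) :=
    (intervalIntegrable_iff_integrableOn_Ioc_of_le zero_le_one).1
      (intervalIntegral.intervalIntegrable_rpow' (by linarith))
  refine hpow.congr_fun (fun t ht => ?_) measurableSet_Ioc
  have hmin : min (t ^ 2) 1 = t ^ (2 : ℝ) := by
    rw [Real.rpow_two, min_eq_left (pow_le_one₀ ht.1.le ht.2)]
  simp only [smul_eq_mul]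
  rw [hmin, ← Real.rpow_natCast, Nat.cast_pred hn, ← Real.rpow_sub ht.1, ← Real.rpow_add ht.1]
  congr 1
  ring

theorem integrableOn_Ioi_pow_smul_min_sq_one_div_rpow {α : ℝ} (hα : 0 < α) {n : ℕ} (hn : 0 < n) :
    IntegrableOn (fun t : ℝ => t ^ (n - 1) • (min (t ^ 2) 1 / t ^ (n + α))) (Ioi 1) := by
  refine (integrableOn_Ioi_rpow_of_lt (a := -1 - α) (by linarith) one_pos).congr_fun
    (fun t (ht : 1 < t) => ?_) measurableSet_Ioi
  have ht0 : 0 < t := one_pos.trans ht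
  simp only [smul_eq_mul]
  rw [min_eq_right (one_le_pow₀ ht.le), one_div, ← Real.rpow_neg ht0.le, ← Real.rpow_natCast,
    Nat.cast_pred hn, ← Real.rpow_add ht0]
  congr 1
  ring

theorem integrable_min_norm_sq_one_div_norm_rpow [NormedSpace ℝ E] [FiniteDimensional ℝ E]
    [Nontrivial E] [MeasurableSpace E] [BorelSpace E] (μ : Measure E) [μ.IsAddHaarMeasure] {α : ℝ}
    (hα0 : 0 < α) (hα2 : α < 2) :
    Integrable (fun h : E => min (‖h‖ ^ 2) 1 / ‖h‖ ^ (finrank ℝ E + α)) μ := by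
  refine (integrable_fun_norm_addHaar μ
    (f := fun t : ℝ => min (t ^ 2) 1 / t ^ (finrank ℝ E + α))).2 ?_
  rw [← Ioc_union_Ioi_eq_Ioi (zero_le_one' ℝ)]
  exact (integrableOn_Ioc_pow_smul_min_sq_one_div_rpow hα2 Module.finrank_pos).union
    (integrableOn_Ioi_pow_smul_min_sq_one_div_rpow hα0 Module.finrank_pos)

theorem norm_sub_sq_le_mul_min {f : E → F} {L : NNReal} (hL : LipschitzWith L f) {M : ℝ}
    (hM : ∀ x, ‖f x‖ ≤ M) (x y : E) :
    ‖f y - f x‖ ^ 2 ≤ (L ^ 2 + (2 * M) ^ 2) * min (‖y - x‖ ^ 2) 1 := by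
  have hlip : ‖f y - f x‖ ^ 2 ≤ L ^ 2 * ‖y - x‖ ^ 2 := by
    rw [← mul_pow]
    gcongr
    exact hL.norm_sub_le y x
  have hbdd : ‖f y - f x‖ ^ 2 ≤ (2 * M) ^ 2 := by
    gcongr
    linarith [norm_sub_le (f y) (f x), hM x, hM y]
  rw [mul_min_of_nonneg _ _ (by positivity), le_min_iff]
  constructor <;> nlinarith [sq_nonneg (2 * M * ‖y - x‖), sq_nonneg (L : ℝ)]

theorem coneEnergyDensity_le_of_lipschitzWith (Γ : Set E) (s : ℝ) {f : E → F} {L : NNReal}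
    (hL : LipschitzWith L f) {M : ℝ} (hM : ∀ x, ‖f x‖ ≤ M) (p : E × E) :
    coneEnergyDensity Γ s f p ≤ (L ^ 2 + (2 * M) ^ 2) *
      ((tsupport f).indicator 1 p.2 * (min (‖p.1 - p.2‖ ^ 2) 1 / ‖p.1 - p.2‖ ^ s) +
        (tsupport f).indicator 1 p.1 * (min (‖p.2 - p.1‖ ^ 2) 1 / ‖p.2 - p.1‖ ^ s)) := by
  set K := tsupport f
  have hK (z : E) : 0 ≤ K.indicator (1 : E → ℝ) z := indicator_nonneg (fun _ _ => zero_le_one) z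
  by_cases hp : p.1 ∈ K ∨ p.2 ∈ K
  · have hone : 1 ≤ K.indicator (1 : E → ℝ) p.2 + K.indicator (1 : E → ℝ) p.1 := by
      rcases hp with h | h <;> simp only [indicator_of_mem h, Pi.one_apply]
      · linarith [hK p.2]
      · linarith [hK p.1]
    rw [norm_sub_rev p.1 p.2, ← add_mul]
    calc coneEnergyDensity Γ s f p
        ≤ ‖f p.2 - f p.1‖ ^ 2 / ‖p.2 - p.1‖ ^ s := coneEnergyDensity_le Γ s f p
      _ ≤ (L ^ 2 + (2 * M) ^ 2) * min (‖p.2 - p.1‖ ^ 2) 1 / ‖p.2 - p.1‖ ^ s := by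
          gcongr
          exact norm_sub_sq_le_mul_min hL hM p.1 p.2
      _ = (L ^ 2 + (2 * M) ^ 2) * (min (‖p.2 - p.1‖ ^ 2) 1 / ‖p.2 - p.1‖ ^ s) := mul_div_assoc ..
      _ ≤ _ := by
          gcongr
          exact le_mul_of_one_le_left (by positivity) hone
  · obtain ⟨h₁, h₂⟩ := not_or.1 hp
    rw [coneEnergyDensity, image_eq_zero_of_notMem_tsupport h₁, image_eq_zero_of_notMem_tsupport h₂,
      indicator_of_notMem h₁, indicator_of_notMem h₂]
    simp

theorem integrable_coneEnergyDensity [NormedSpace ℝ E] [FiniteDimensional ℝ E] [Nontrivial E]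
    [MeasurableSpace E] [BorelSpace E] (μ : Measure E) [μ.IsAddHaarMeasure] {α : ℝ} (hα0 : 0 < α)
    (hα2 : α < 2) {Γ : Set E} (hΓ : MeasurableSet Γ) {f : E → F} {L : NNReal}
    (hL : LipschitzWith L f) (hf : HasCompactSupport f) :
    Integrable (coneEnergyDensity Γ (finrank ℝ E + α) f) (μ.prod μ) := by
  obtain ⟨M, hM⟩ := hf.exists_bound_of_continuous hL.continuous
  have hsupp : Integrable ((tsupport f).indicator (1 : E → ℝ)) μ :=
    (integrable_indicator_iff (isClosed_tsupport f).measurableSet).2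
      (integrableOn_const hf.isCompact.measure_lt_top.ne)
  have hdom := hsupp.convolution_integrand (ContinuousLinearMap.mul ℝ ℝ)
    (integrable_min_norm_sq_one_div_norm_rpow μ hα0 hα2)
  have hmeas : Measurable (coneEnergyDensity Γ (finrank ℝ E + α) f) := by
    have hind : Measurable fun p : E × E => Γ.indicator (fun _ => (1 : ℝ)) (p.1 - p.2) :=
      (measurable_const.indicator hΓ).comp measurable_sub
    have hdiff : Measurable fun p : E × E => ‖f p.2 - f p.1‖ :=
      ((hL.continuous.comp continuous_snd).sub (hL.continuous.comp continuous_fst)).norm.measurable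
    exact ((hdiff.pow_const 2).mul hind).div (by fun_prop)
  refine ((hdom.add hdom.swap).const_mul (L ^ 2 + (2 * M) ^ 2)).mono' hmeas.aestronglyMeasurable
    (Eventually.of_forall fun p => ?_)
  rw [Real.norm_of_nonneg (coneEnergyDensity_nonneg _ _ _ _)]
  exact coneEnergyDensity_le_of_lipschitzWith Γ _ hL hM p

end FiniteEnergy

section Averaging

variable {E F : Type*} [NormedAddCommGroup E] [MeasurableSpace E] [MeasurableAdd₂ E]
  [MeasurableNeg E] [NormedAddCommGroup F] {μ : Measure E} [SFinite μ] [μ.IsAddRightInvariant]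
  {Γ B : Set E} {s ρ : ℝ} {f : E → F}

theorem measure_mul_lintegral_norm_sq_le (hs : 0 ≤ s) (hρ0 : 0 ≤ ρ) (hB : MeasurableSet B)
    (hBΓ : B ⊆ Γ) (hBρ : ∀ h ∈ B, ‖h‖ ≤ ρ) (hf : Integrable f μ)
    (hE : Integrable (coneEnergyDensity Γ s f) (μ.prod μ)) :
    μ B * ∫⁻ y, ENNReal.ofReal (‖f y‖ ^ 2) ∂μ ≤
      ENNReal.ofReal (ρ ^ s * coneEnergy μ Γ s f + 2 * (∫ x, ‖f x‖ ∂μ) ^ 2) := by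
  have hmeas : AEMeasurable (fun y => ENNReal.ofReal (‖f y‖ ^ 2)) μ :=
    (hf.aestronglyMeasurable.norm.aemeasurable.pow_const 2).ennreal_ofReal
  have hff : Integrable (fun p : E × E => ‖f p.1‖ * ‖f p.2‖) (μ.prod μ) :=
    hf.norm.mul_prod hf.norm
  calc μ B * ∫⁻ y, ENNReal.ofReal (‖f y‖ ^ 2) ∂μ
      = ∫⁻ p : E × E, ENNReal.ofReal (B.indicator 1 (p.1 - p.2) * ‖f p.2‖ ^ 2) ∂(μ.prod μ) := by
        rw [← lintegral_prod_indicator_sub_mul hB hmeas]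
        congr 1 with p
        by_cases hp : p.1 - p.2 ∈ B <;> simp [hp]
    _ ≤ ∫⁻ p : E × E, ENNReal.ofReal
          (ρ ^ s * coneEnergyDensity Γ s f p + 2 * (‖f p.1‖ * ‖f p.2‖)) ∂(μ.prod μ) :=
        lintegral_mono fun p =>
          ENNReal.ofReal_le_ofReal (indicator_mul_norm_sq_le hs hρ0 hBΓ hBρ f p)
    _ = ENNReal.ofReal (∫ p : E × E,
          ρ ^ s * coneEnergyDensity Γ s f p + 2 * (‖f p.1‖ * ‖f p.2‖) ∂(μ.prod μ)) := by
        refine (ofReal_integral_eq_lintegral_ofReal ((hE.const_mul _).add (hff.const_mul 2))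
          (Eventually.of_forall fun p => ?_)).symm
        have := coneEnergyDensity_nonneg Γ s f p
        exact add_nonneg (by positivity) (by positivity)
    _ = ENNReal.ofReal (ρ ^ s * coneEnergy μ Γ s f + 2 * (∫ x, ‖f x‖ ∂μ) ^ 2) := by
        rw [integral_add (hE.const_mul _) (hff.const_mul 2), integral_const_mul,
          integral_const_mul, integral_prod_mul (fun x => ‖f x‖) (fun x => ‖f x‖), sq, coneEnergy]

theorem integrable_norm_sq_of_integrable_coneEnergyDensity (hs : 0 ≤ s) (hρ0 : 0 ≤ ρ)
    (hB : MeasurableSet B) (hB0 : μ B ≠ 0) (hBΓ : B ⊆ Γ) (hBρ : ∀ h ∈ B, ‖h‖ ≤ ρ)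
    (hf : Integrable f μ) (hE : Integrable (coneEnergyDensity Γ s f) (μ.prod μ)) :
    Integrable (fun x => ‖f x‖ ^ 2) μ := by
  refine ⟨hf.aestronglyMeasurable.norm.pow 2,
    (hasFiniteIntegral_iff_ofReal (Eventually.of_forall fun _ => sq_nonneg _)).2 ?_⟩
  have hle := measure_mul_lintegral_norm_sq_le hs hρ0 hB hBΓ hBρ hf hE
  exact ENNReal.lt_top_of_mul_ne_top_right (ne_top_of_le_ne_top ENNReal.ofReal_ne_top hle) hB0

theorem measureReal_mul_integral_norm_sq_le (hs : 0 ≤ s) (hρ0 : 0 ≤ ρ) (hB : MeasurableSet B)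
    (hBΓ : B ⊆ Γ) (hBρ : ∀ h ∈ B, ‖h‖ ≤ ρ) (hf : Integrable f μ)
    (hE : Integrable (coneEnergyDensity Γ s f) (μ.prod μ)) :
    μ.real B * ∫ x, ‖f x‖ ^ 2 ∂μ ≤
      ρ ^ s * coneEnergy μ Γ s f + 2 * (∫ x, ‖f x‖ ∂μ) ^ 2 := by
  have := coneEnergy_nonneg μ Γ s f
  rw [integral_eq_lintegral_of_nonneg_ae (Eventually.of_forall fun _ => sq_nonneg _)
    (hf.aestronglyMeasurable.norm.pow 2), Measure.real, ← ENNReal.toReal_mul]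
  exact ENNReal.toReal_le_of_le_ofReal (by positivity)
    (measure_mul_lintegral_norm_sq_le hs hρ0 hB hBΓ hBρ hf hE)

end Averaging

section Nash

variable {E F : Type*} [NormedAddCommGroup E] [NormedSpace ℝ E] [FiniteDimensional ℝ E]
  [MeasurableSpace E] [BorelSpace E] [NormedAddCommGroup F]

theorem measureReal_mul_integral_norm_sq_le_of_cone (μ : Measure E) [μ.IsAddHaarMeasure] {α : ℝ}
    (hα : 0 ≤ α) {Γ U : Set E} (hΓ : ∀ x ∈ Γ, ∀ r : ℝ, 0 < r → r • x ∈ Γ) (hU : MeasurableSet U)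
    (hUΓ : U ⊆ Γ) {R : ℝ} (hR : 0 ≤ R) (hUR : ∀ h ∈ U, ‖h‖ ≤ R) {f : E → F} (hf : Integrable f μ)
    (hE : Integrable (coneEnergyDensity Γ (finrank ℝ E + α) f) (μ.prod μ)) {r : ℝ} (hr : 0 < r) :
    μ.real U * ∫ x, ‖f x‖ ^ 2 ∂μ ≤
      r ^ α * (R ^ (finrank ℝ E + α) * coneEnergy μ Γ (finrank ℝ E + α) f) +
        r ^ (-(finrank ℝ E : ℝ)) * (2 * (∫ x, ‖f x‖ ∂μ) ^ 2) := by
  have hsub : r • U ⊆ Γ := by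
    rintro _ ⟨h, hh, rfl⟩
    exact hΓ h (hUΓ hh) r hr
  have hnorm : ∀ h ∈ r • U, ‖h‖ ≤ r * R := by
    rintro _ ⟨h, hh, rfl⟩
    rw [norm_smul, Real.norm_of_nonneg hr.le]
    exact mul_le_mul_of_nonneg_left (hUR h hh) hr.le
  have hvol : μ.real (r • U) = r ^ (finrank ℝ E : ℝ) * μ.real U := by
    rw [Measure.real, Measure.addHaar_smul_of_nonneg μ hr.le, ENNReal.toReal_mul,
      ENNReal.toReal_ofReal (by positivity), Real.rpow_natCast, Measure.real]
  have hle := measureReal_mul_integral_norm_sq_le (by positivity) (by positivity)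
    (hU.const_smul₀ r) hsub hnorm hf hE
  rw [hvol, Real.mul_rpow hr.le hR, Real.rpow_add hr, mul_assoc] at hle
  rw [Real.rpow_neg hr.le]
  refine (le_inv_mul_iff₀ (by positivity)).2 hle |>.trans_eq ?_
  field_simp

theorem nash_inequality_cone_general [Nontrivial E] (μ : Measure E) [μ.IsAddHaarMeasure] {α : ℝ}
    (hα : 0 < α) {Γ : Set E} (hΓint : (interior Γ).Nonempty)
    (hΓcone : ∀ x ∈ Γ, ∀ r : ℝ, 0 < r → r • x ∈ Γ) :
    ∃ c₀ : ℝ, 0 < c₀ ∧ ∀ f : E → F, Integrable f μ →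
      Integrable (coneEnergyDensity Γ (finrank ℝ E + α) f) (μ.prod μ) →
      Integrable (fun x => ‖f x‖ ^ 2) μ ∧
      ∫ x, ‖f x‖ ^ 2 ∂μ ≤
        c₀ * coneEnergy μ Γ (finrank ℝ E + α) f ^ ((finrank ℝ E : ℝ) / (finrank ℝ E + α))
          * (∫ x, ‖f x‖ ∂μ) ^ (2 * α / (finrank ℝ E + α)) := by
  obtain ⟨x₀, hx₀⟩ := hΓint
  obtain ⟨ε, hε, hball⟩ := Metric.isOpen_iff.1 isOpen_interior x₀ hx₀
  have hUΓ : ball x₀ ε ⊆ Γ := hball.trans interior_subset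
  obtain ⟨R, hR, hUR⟩ := (isBounded_ball (x := x₀) (r := ε)).exists_pos_norm_le
  have hU0 : μ (ball x₀ ε) ≠ 0 := (measure_ball_pos μ x₀ hε).ne'
  set V := μ.real (ball x₀ ε)
  have hV : 0 < V := ENNReal.toReal_pos hU0 measure_ball_lt_top.ne
  have hd : (0 : ℝ) < finrank ℝ E := by exact_mod_cast Module.finrank_pos
  set d := ((finrank ℝ E : ℕ) : ℝ)
  refine ⟨V⁻¹ * (2 * ((R ^ (d + α)) ^ (d / (d + α)) * 2 ^ (α / (d + α)))), by positivity,
    fun f hf hE => ⟨integrable_norm_sq_of_integrable_coneEnergyDensity (by positivity) hR.le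
      measurableSet_ball hU0 hUΓ hUR hf hE, ?_⟩⟩
  have hE0 := coneEnergy_nonneg μ Γ (d + α) f
  have hN0 : 0 ≤ ∫ x, ‖f x‖ ∂μ := integral_nonneg fun x => norm_nonneg (f x)
  have hle := le_two_mul_rpow_mul_rpow_of_forall_le hα hd (by positivity) (by positivity)
    fun r hr => measureReal_mul_integral_norm_sq_le_of_cone μ hα.le hΓcone measurableSet_ball hUΓ
      hR.le hUR hf hE hr
  rw [Real.mul_rpow (by positivity) hE0, Real.mul_rpow zero_le_two (by positivity),
    ← Real.rpow_natCast_mul hN0, Nat.cast_ofNat, ← mul_div_assoc] at hle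
  refine (le_inv_mul_iff₀ hV).2 hle |>.trans_eq ?_
  ring

end Nash

/-- **Lemma 2.4** (Nash-type inequality for the directional fractional Dirichlet form).
For an infinite symmetric cone `Γ` with non-empty interior there is `c₀ > 0` such that
`‖f‖₂² ≤ c₀ E₀(f,f)^{d/(d+α)} ‖f‖₁^{2α/(d+α)}` for all `f ∈ C_c¹(ℝ^d)`. -/
theorem nash_inequality_cone
    (d : ℕ) (hd : 0 < d) (α : ℝ) (hα0 : 0 < α) (hα2 : α < 2)
    (Γ : Set (Rd d)) (hΓopen : IsOpen Γ) (hΓne : Γ.Nonempty)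
    (hΓcone : ∀ x ∈ Γ, ∀ r : ℝ, r ≠ 0 → r • x ∈ Γ) :
    ∃ c₀ : ℝ, 0 < c₀ ∧ ∀ f : Rd d → ℝ, ContDiff ℝ 1 f → HasCompactSupport f →
      ∫ x, f x ^ 2 ≤
        c₀ * (∫ p : Rd d × Rd d,
                (f p.2 - f p.1) ^ 2 * Γ.indicator (fun _ => (1 : ℝ)) (p.1 - p.2)
                  / ‖p.2 - p.1‖ ^ ((d : ℝ) + α)) ^ ((d : ℝ) / ((d : ℝ) + α))
           * (∫ x, |f x|) ^ (2 * α / ((d : ℝ) + α)) := by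
  have : Nonempty (Fin d) := Fin.pos_iff_nonempty.1 hd
  obtain ⟨c₀, hc₀, hnash⟩ := nash_inequality_cone_general (F := ℝ) (volume : Measure (Rd d)) hα0
    (hΓopen.interior_eq.symm ▸ hΓne) fun x hx r hr => hΓcone x hx r hr.ne'
  refine ⟨c₀, hc₀, fun f hf hfc => ?_⟩
  obtain ⟨L, hL⟩ := ContDiff.lipschitzWith_of_hasCompactSupport hfc hf one_ne_zero
  have hE := integrable_coneEnergyDensity volume hα0 hα2 hΓopen.measurableSet hL hfc
  simpa only [coneEnergy, coneEnergyDensity, finrank_euclideanSpace_fin, Real.norm_eq_abs, sq_abs,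
    Measure.volume_eq_prod] using (hnash f (hf.continuous.integrable_of_hasCompactSupport hfc) hE).2

end
end

section
/- Assume (A1) holds, and that there is a non-negative random variable Λ on Ω with 𝔼[Λ^p] < ∞ for some p > 1 such that κ(x,y;ω) ≤ Λ(τ_x ω) + Λ(τ_y ω) for every ω ∈ Ω and all x,y ∈ ℝ^d. Then there is a set Ω₁ ⊆ Ω of full ℙ-measure such that for every ω ∈ Ω₁, every η > 0, every locally bounded measurable f on ℝ^d and every bounded measurable compactly supported g on ℝ^d: lim_{ε→0} ∫_{ℝ^d}∫_{{η<|z|<1/η, z∈Γ}} (f(x+z)−f(x))(g(x+z)−g(x))·|z|^{−(d+α)}·κ(x/ε,(x+z)/ε;ω) dz dx = ∫_{ℝ^d}∫_{{η<|z|<1/η, z∈Γ}} (f(x+z)−f(x))(g(x+z)−g(x))·|z|^{−(d+α)}·(ν̄(z)+ν̄(−z)) dz dx, where ν̄ is the function from (A1). -/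
open MeasureTheory Filter Metric Set
open scoped ENNReal Topology

noncomputable section

/-!
Write the coefficient as `K(x, z) + K(x + z, -z)` with `K(x, z) = ν(z; τ_x ω)`. The map
`(x, z) ↦ (x + z, -z)` is a measure-preserving linear involution, so it is enough to find the weak
limit of `K(·/ε)` on the product space, tested against bounded compactly supported functions.

For the truncations `ν ∧ n` the decay of correlations bounds the second moment of the error by a
power of `ε`. Borel-Cantelli then gives almost sure convergence along a sequence of scales `ε`
whose successive ratios tend to `1`, and a countable dense family of test functions suffices.

The remainder `ν - ν ∧ 2n` is at most the sum of the excesses `(Λ - n)⁺` at the two endpoints. By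
the weak-type maximal inequality along orbits, the maximal function of the excess tends to `0`
almost surely as `n → ∞`, so the truncation error vanishes uniformly in `ε`.
-/

section TestFunctions

variable {V W : Type*} [NormedAddCommGroup V] [MeasurableSpace V]
  [NormedAddCommGroup W] [MeasurableSpace W] {F : V → ℝ}

/-- Admissible test functions for weak convergence: bounded, measurable, compactly supported. -/
structure IsTestFunction (F : V → ℝ) : Prop where
  measurable : Measurable F
  bounded : ∃ M, ∀ v, |F v| ≤ M
  hasCompactSupport : HasCompactSupport F

namespace IsTestFunction

lemma of_continuous [OpensMeasurableSpace V] (hF : Continuous F) (hFs : HasCompactSupport F) :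
    IsTestFunction F :=
  ⟨hF.measurable, hFs.exists_bound_of_continuous hF, hFs⟩

lemma integrable_mul [OpensMeasurableSpace V] {μ : Measure V} {ψ : V → ℝ}
    (hF : IsTestFunction F) (hψ : LocallyIntegrable ψ μ) :
    Integrable (fun v => F v * ψ v) μ := by
  obtain ⟨M, hM⟩ := hF.bounded
  have hsupp : Function.support (fun v => F v * ψ v) ⊆ tsupport F :=
    (Function.support_mul_subset_left F ψ).trans (subset_tsupport F)
  rw [← integrableOn_iff_integrable_of_support_subset hsupp]
  exact (hψ.integrableOn_isCompact hF.hasCompactSupport.isCompact).bdd_mul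
    hF.measurable.aestronglyMeasurable (ae_of_all _ hM)

lemma integrable [OpensMeasurableSpace V] {μ : Measure V} [IsLocallyFiniteMeasure μ]
    (hF : IsTestFunction F) : Integrable F μ := by
  simpa using hF.integrable_mul (locallyIntegrable_const (1 : ℝ))

lemma comp_homeomorph [BorelSpace V] [BorelSpace W] (hF : IsTestFunction F) (σ : W ≃ₜ V) :
    IsTestFunction (F ∘ σ) :=
  ⟨hF.measurable.comp σ.measurable, hF.bounded.imp fun _ hM w => hM (σ w),
    hF.hasCompactSupport.comp_homeomorph σ⟩

lemma integral_fst [ProperSpace W] [OpensMeasurableSpace V] {μ : Measure V}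
    [IsFiniteMeasureOnCompacts μ] [SFinite μ] [ProperSpace V] {F : V × W → ℝ}
    (hF : IsTestFunction F) : IsTestFunction fun w => ∫ v, F (v, w) ∂μ := by
  obtain ⟨M, hM⟩ := hF.bounded
  obtain ⟨R, -, hR⟩ := hF.hasCompactSupport.exists_pos_le_norm
  refine ⟨(hF.measurable.stronglyMeasurable.integral_prod_left').measurable,
    ⟨M * μ.real (closedBall 0 R), fun w => ?_⟩, HasCompactSupport.intro
      (isCompact_closedBall (0 : W) R) fun w hw => ?_⟩
  · have hsub : ∀ v ∉ closedBall (0 : V) R, F (v, w) = 0 := fun v hv =>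
      hR _ ((not_le.1 (mt mem_closedBall_zero_iff.2 hv)).le.trans (norm_fst_le (v, w)))
    rw [← setIntegral_eq_integral_of_forall_compl_eq_zero hsub]
    exact norm_setIntegral_le_of_norm_le_const (f := fun v => F (v, w))
      measure_closedBall_lt_top fun v _ => hM (v, w)
  · have hzero : ∀ v, F (v, w) = 0 := fun v =>
      hR _ ((not_le.1 (mt mem_closedBall_zero_iff.2 hw)).le.trans (norm_snd_le (v, w)))
    simp only [hzero, integral_zero]

end IsTestFunction

lemma isTestFunction_indicator_one [ProperSpace V] {s : Set V} (hs : MeasurableSet s)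
    (hsb : Bornology.IsBounded s) : IsTestFunction (s.indicator fun _ => (1 : ℝ)) where
  measurable := measurable_const.indicator hs
  bounded := ⟨1, fun v => by by_cases hv : v ∈ s <;> simp [hv]⟩
  hasCompactSupport := HasCompactSupport.intro hsb.isCompact_closure fun _ hv =>
    indicator_of_notMem (mt (subset_closure ·) hv) _

lemma integral_indicator_mul {X : Type*} [MeasurableSpace X] {μ : Measure X} {s : Set X}
    (hs : MeasurableSet s) (F G : X → ℝ) :
    ∫ x, s.indicator F x * G x ∂μ = ∫ x in s, F x * G x ∂μ := by
  simp_rw [← integral_indicator hs, indicator_mul_left]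

lemma locallyIntegrable_of_abs_le {X : Type*} [TopologicalSpace X] [MeasurableSpace X]
    {μ : Measure X} [IsLocallyFiniteMeasure μ] {ψ : X → ℝ} {M : ℝ} (hψ : Measurable ψ)
    (hM : ∀ x, |ψ x| ≤ M) : LocallyIntegrable ψ μ :=
  (locallyIntegrable_const M).mono hψ.aestronglyMeasurable
    (ae_of_all _ fun x => (hM x).trans (le_abs_self M))

lemma locallyIntegrable_comp_snd {X Y : Type*} [TopologicalSpace X] [MeasurableSpace X]
    [TopologicalSpace Y] [MeasurableSpace Y] {μ : Measure X} {μ' : Measure Y}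
    [IsLocallyFiniteMeasure μ] [SFinite μ] [SFinite μ'] {ψ : Y → ℝ}
    (hψ : LocallyIntegrable ψ μ') :
    LocallyIntegrable (fun q => ψ q.2) (μ.prod μ') := by
  rintro ⟨x, y⟩
  obtain ⟨s, hs, hμs⟩ := μ.finiteAt_nhds x
  obtain ⟨t, ht, hψt⟩ := hψ y
  refine ⟨s ×ˢ t, prod_mem_nhds hs ht, ?_⟩
  have : IsFiniteMeasure (μ.restrict s) := ⟨by simpa using hμs⟩
  rw [IntegrableOn, ← Measure.prod_restrict]
  exact Integrable.comp_snd hψt _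

lemma locallyIntegrable_comp_homeomorph {X : Type*} [TopologicalSpace X] [MeasurableSpace X]
    [BorelSpace X] {μ : Measure X} {ψ : X → ℝ} (hψ : LocallyIntegrable ψ μ) {σ : X ≃ₜ X}
    (hσ : MeasurePreserving σ μ μ) : LocallyIntegrable (fun x => ψ (σ x)) μ :=
  (locallyIntegrable_map_homeomorph σ).1 (by rwa [hσ.map_eq])

end TestFunctions

section ScalingLimits

variable {V : Type*} [NormedAddCommGroup V] [NormedSpace ℝ V] [MeasurableSpace V]
  {μ : Measure V} {ψ ψ' ψ₁ ψ₂ ψ₁' ψ₂' : V → ℝ}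

/-- Weak convergence of the rescaled functions `ψ (· / ε)` to `ψ'` as `ε → 0⁺`, tested against
bounded measurable functions of compact support. -/
def HasScalingLimit (μ : Measure V) (ψ ψ' : V → ℝ) : Prop :=
  ∀ F : V → ℝ, IsTestFunction F →
    Tendsto (fun ε : ℝ => ∫ v, F v * ψ (ε⁻¹ • v) ∂μ) (𝓝[>] 0) (𝓝 (∫ v, F v * ψ' v ∂μ))

lemma HasScalingLimit.comp_linearEquiv [BorelSpace V]
    (h : HasScalingLimit μ ψ ψ') (σ : V ≃L[ℝ] V)
    (hσ : MeasurePreserving σ μ μ) :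
    HasScalingLimit μ (fun v => ψ (σ v)) (fun v => ψ' (σ v)) := by
  have hchange : ∀ (F G : V → ℝ), ∫ v, F v * G (σ v) ∂μ = ∫ v, F (σ.symm v) * G v ∂μ := by
    intro F G
    simpa using hσ.integral_comp σ.toHomeomorph.measurableEmbedding fun v => F (σ.symm v) * G v
  intro F hF
  have hlim := h _ (hF.comp_homeomorph σ.symm.toHomeomorph)
  refine (hlim.congr fun ε => ?_).trans_eq (congrArg 𝓝 (hchange F ψ').symm)
  simp_rw [map_smul]
  exact (hchange F fun v => ψ (ε⁻¹ • v)).symm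

variable [FiniteDimensional ℝ V]

lemma HasScalingLimit.tendsto_setIntegral (h : HasScalingLimit μ ψ ψ') {s : Set V}
    (hs : MeasurableSet s) (hsb : Bornology.IsBounded s) :
    Tendsto (fun ε : ℝ => ∫ v in s, ψ (ε⁻¹ • v) ∂μ) (𝓝[>] 0) (𝓝 (∫ v in s, ψ' v ∂μ)) := by
  have := FiniteDimensional.proper ℝ V
  simpa only [integral_indicator_mul hs, one_mul] using h _ (isTestFunction_indicator_one hs hsb)

variable [BorelSpace V]

lemma locallyIntegrable_comp_smul [μ.IsAddHaarMeasure] (hψ : LocallyIntegrable ψ μ) {c : ℝ}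
    (hc : c ≠ 0) : LocallyIntegrable (fun v => ψ (c • v)) μ := by
  refine (locallyIntegrable_map_homeomorph (Homeomorph.smulOfNeZero c hc)).1 ?_
  have hmap : Measure.map (Homeomorph.smulOfNeZero c hc) μ =
      ENNReal.ofReal |(c ^ Module.finrank ℝ V)⁻¹| • μ := Measure.map_addHaar_smul μ hc
  rw [hmap]
  refine fun v => (hψ v).imp fun s hs => ⟨hs.1, ?_⟩
  rw [IntegrableOn, Measure.restrict_smul]
  exact hs.2.smul_measure ENNReal.ofReal_ne_top

lemma dist_integral_mul_le_of_forall_abs_le {F : V → ℝ} {M R : ℝ}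
    (hF : IsTestFunction F) (hM : ∀ v, |F v| ≤ M) (hR : ∀ v, R ≤ ‖v‖ → F v = 0)
    (hψ₁ : LocallyIntegrable ψ₁ μ) (hψ₂ : LocallyIntegrable ψ₂ μ) :
    dist (∫ v, F v * ψ₁ v ∂μ) (∫ v, F v * ψ₂ v ∂μ) ≤
      M * (∫⁻ v in closedBall 0 R, ‖ψ₁ v - ψ₂ v‖ₑ ∂μ).toReal := by
  have : ProperSpace V := FiniteDimensional.proper ℝ V
  have hint : IntegrableOn (ψ₁ - ψ₂) (closedBall 0 R) μ :=
    (hψ₁.sub hψ₂).integrableOn_isCompact (isCompact_closedBall 0 R)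
  have houtside : ∀ v ∉ closedBall (0 : V) R, F v * (ψ₁ - ψ₂) v = 0 := fun v hv => by
    rw [hR v (not_le.1 (mt mem_closedBall_zero_iff.2 hv)).le, zero_mul]
  calc dist (∫ v, F v * ψ₁ v ∂μ) (∫ v, F v * ψ₂ v ∂μ)
      = ‖∫ v in closedBall 0 R, F v * (ψ₁ - ψ₂) v ∂μ‖ := by
        rw [dist_eq_norm, ← integral_sub (hF.integrable_mul hψ₁) (hF.integrable_mul hψ₂),
          setIntegral_eq_integral_of_forall_compl_eq_zero houtside]
        simp only [Pi.sub_apply, mul_sub]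
    _ ≤ ∫ v in closedBall 0 R, M * ‖(ψ₁ - ψ₂) v‖ ∂μ :=
        norm_integral_le_of_norm_le (hint.norm.const_mul M) <| ae_of_all _ fun v => by
          rw [norm_mul]
          exact mul_le_mul_of_nonneg_right (hM v) (norm_nonneg _)
    _ = M * (∫⁻ v in closedBall 0 R, ‖ψ₁ v - ψ₂ v‖ₑ ∂μ).toReal := by
        rw [integral_const_mul, integral_norm_eq_lintegral_enorm hint.1]
        rfl

namespace HasScalingLimit

lemma add [μ.IsAddHaarMeasure] (h₁ : HasScalingLimit μ ψ₁ ψ₁') (h₂ : HasScalingLimit μ ψ₂ ψ₂')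
    (hψ₁ : LocallyIntegrable ψ₁ μ) (hψ₂ : LocallyIntegrable ψ₂ μ)
    (hψ₁' : LocallyIntegrable ψ₁' μ) (hψ₂' : LocallyIntegrable ψ₂' μ) :
    HasScalingLimit μ (fun v => ψ₁ v + ψ₂ v) (fun v => ψ₁' v + ψ₂' v) := by
  intro F hF
  simp only [mul_add]
  rw [integral_add (hF.integrable_mul hψ₁') (hF.integrable_mul hψ₂')]
  refine ((h₁ F hF).add (h₂ F hF)).congr' ?_
  filter_upwards [self_mem_nhdsWithin] with ε (hε : 0 < ε)
  exact (integral_add (hF.integrable_mul (locallyIntegrable_comp_smul hψ₁ (inv_ne_zero hε.ne')))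
    (hF.integrable_mul (locallyIntegrable_comp_smul hψ₂ (inv_ne_zero hε.ne')))).symm

lemma add_comp_linearEquiv [μ.IsAddHaarMeasure] (h : HasScalingLimit μ ψ ψ')
    (hψ : LocallyIntegrable ψ μ) (hψ' : LocallyIntegrable ψ' μ) (σ : V ≃L[ℝ] V)
    (hσ : MeasurePreserving σ μ μ) :
    HasScalingLimit μ (fun v => ψ v + ψ (σ v)) fun v => ψ' v + ψ' (σ v) :=
  h.add (h.comp_linearEquiv σ hσ) hψ
    (locallyIntegrable_comp_homeomorph hψ (σ := σ.toHomeomorph) hσ) hψ'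
    (locallyIntegrable_comp_homeomorph hψ' (σ := σ.toHomeomorph) hσ)

lemma comp_snd {W : Type*} [NormedAddCommGroup W] [NormedSpace ℝ W] [FiniteDimensional ℝ W]
    [MeasurableSpace W] [BorelSpace W] {μ' : Measure W} [IsLocallyFiniteMeasure μ']
    [μ.IsAddHaarMeasure] (h : HasScalingLimit μ ψ ψ')
    (hψ : LocallyIntegrable ψ μ) (hψ' : LocallyIntegrable ψ' μ) :
    HasScalingLimit (μ'.prod μ) (fun q => ψ q.2) (fun q => ψ' q.2) := by
  have : ProperSpace V := FiniteDimensional.proper ℝ V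
  have : ProperSpace W := FiniteDimensional.proper ℝ W
  intro F hF
  have hfubini : ∀ G : V → ℝ, LocallyIntegrable G μ →
      ∫ q, F q * G q.2 ∂(μ'.prod μ) = ∫ v, (∫ w, F (w, v) ∂μ') * G v ∂μ := by
    intro G hG
    rw [integral_prod_symm _ (hF.integrable_mul (locallyIntegrable_comp_snd hG))]
    simp only [integral_mul_const]
  rw [hfubini ψ' hψ']
  refine (h _ hF.integral_fst).congr' ?_
  filter_upwards [self_mem_nhdsWithin] with ε (hε : 0 < ε)
  exact (hfubini _ (locallyIntegrable_comp_smul hψ (inv_ne_zero hε.ne'))).symm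

lemma locallyIntegrable [μ.IsAddHaarMeasure] (h : HasScalingLimit μ ψ ψ')
    (hψ : LocallyIntegrable ψ μ) (hψ0 : ∀ v, 0 ≤ ψ v)
    (hψ' : Measurable ψ') (hψ'0 : ∀ v, 0 ≤ ψ' v) : LocallyIntegrable ψ' μ := by
  have := FiniteDimensional.proper ℝ V
  suffices hball : ∀ R : ℝ, IntegrableOn ψ' (closedBall 0 R) μ from fun v =>
    ⟨closedBall 0 (‖v‖ + 1), closedBall_mem_nhds_of_mem (by simp), hball _⟩
  intro R
  let S : ℕ → Set V := fun n => closedBall 0 R ∩ {v | ψ' v ≤ n}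
  have hS : ∀ n, MeasurableSet (S n) := fun n =>
    measurableSet_closedBall.inter (measurableSet_le hψ' measurable_const)
  have hSbdd : ∀ n, Bornology.IsBounded (S n) := fun n =>
    isBounded_closedBall.subset inter_subset_left
  have hSmono : Monotone S := fun m n hmn v hv => ⟨hv.1, le_trans hv.2.out (Nat.cast_le.2 hmn)⟩
  have hSunion : closedBall 0 R = ⋃ n, S n := by
    rw [← inter_iUnion, eq_comm, inter_eq_left]
    exact fun v _ => mem_iUnion.2 (exists_nat_ge (ψ' v))
  have hbound : ∀ n, ∫⁻ v in S n, ENNReal.ofReal (ψ' v) ∂μ ≤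
      ENNReal.ofReal (∫ v in closedBall 0 R, ψ' v ∂μ) := by
    intro n
    have hint : IntegrableOn ψ' (S n) μ := by
      refine Measure.integrableOn_of_bounded (M := n) (hSbdd n).measure_lt_top.ne
        hψ'.aestronglyMeasurable ((ae_restrict_mem (hS n)).mono fun v hv => ?_)
      simpa only [Real.norm_eq_abs, abs_of_nonneg (hψ'0 v)] using hv.2.out
    rw [← ofReal_integral_eq_lintegral_ofReal hint (ae_of_all _ hψ'0)]
    refine ENNReal.ofReal_le_ofReal (le_of_tendsto_of_tendsto
      (h.tendsto_setIntegral (hS n) (hSbdd n))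
      (h.tendsto_setIntegral measurableSet_closedBall isBounded_closedBall) ?_)
    filter_upwards [self_mem_nhdsWithin] with ε (hε : 0 < ε)
    have hψε := locallyIntegrable_comp_smul hψ (inv_ne_zero hε.ne')
    exact setIntegral_mono_set (hψε.integrableOn_isCompact (isCompact_closedBall 0 R))
      (ae_of_all _ fun v => hψ0 _) inter_subset_left.eventuallyLE
  refine ⟨hψ'.aestronglyMeasurable, ?_⟩
  rw [hasFiniteIntegral_iff_ofReal (ae_of_all _ hψ'0), hSunion,
    setLIntegral_iUnion_of_directed _ hSmono.directed_le]
  exact (iSup_le hbound).trans_lt ENNReal.ofReal_lt_top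

lemma of_approx [μ.IsAddHaarMeasure] (hψ : LocallyIntegrable ψ μ)
    (happrox : ∀ R δ : ℝ, 0 < R → 0 < δ → ∃ b, LocallyIntegrable b μ ∧ HasScalingLimit μ b ψ' ∧
      ∀ᶠ ε : ℝ in 𝓝[>] 0,
        ∫⁻ v in closedBall 0 R, ‖ψ (ε⁻¹ • v) - b (ε⁻¹ • v)‖ₑ ∂μ ≤ ENNReal.ofReal δ) :
    HasScalingLimit μ ψ ψ' := by
  intro F hF
  obtain ⟨M, hM⟩ := hF.bounded
  obtain ⟨R, hR0, hR⟩ := hF.hasCompactSupport.exists_pos_le_norm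
  have hM0 : 0 ≤ M := (abs_nonneg _).trans (hM 0)
  rw [Metric.tendsto_nhds]
  intro δ hδ
  obtain ⟨b, hb, hlim, hclose⟩ := happrox R (δ / (2 * (M + 1))) hR0 (by positivity)
  filter_upwards [hclose, Metric.tendsto_nhds.1 (hlim F hF) (δ / 2) (half_pos hδ),
    self_mem_nhdsWithin] with ε hclose hlimε (hε : 0 < ε)
  have hψε := locallyIntegrable_comp_smul hψ (inv_ne_zero hε.ne')
  have hbε := locallyIntegrable_comp_smul hb (inv_ne_zero hε.ne')
  have hdiff : dist (∫ v, F v * ψ (ε⁻¹ • v) ∂μ) (∫ v, F v * b (ε⁻¹ • v) ∂μ) ≤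
      M * (δ / (2 * (M + 1))) :=
    (dist_integral_mul_le_of_forall_abs_le hF hM hR hψε hbε).trans <| by
      gcongr
      exact ENNReal.toReal_le_of_le_ofReal (by positivity) hclose
  have hhalf : M * (δ / (2 * (M + 1))) ≤ δ / 2 := by
    rw [mul_div_assoc', div_le_div_iff₀ (by positivity) two_pos]
    nlinarith
  linarith [dist_triangle (∫ v, F v * ψ (ε⁻¹ • v) ∂μ) (∫ v, F v * b (ε⁻¹ • v) ∂μ)
    (∫ v, F v * ψ' v ∂μ)]

end HasScalingLimit

end ScalingLimits

section PowerScales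

lemma dist_integral_mul_le_of_abs_le {X : Type*} [MeasurableSpace X] {μ : Measure X}
    {F G ψ : X → ℝ} {M : ℝ} (hF : Integrable F μ) (hG : Integrable G μ) (hψ : Measurable ψ)
    (hM : ∀ x, |ψ x| ≤ M) :
    dist (∫ x, F x * ψ x ∂μ) (∫ x, G x * ψ x ∂μ) ≤ M * ∫ x, |F x - G x| ∂μ := by
  have hψb : ∀ᵐ x ∂μ, ‖ψ x‖ ≤ M := ae_of_all _ hM
  rw [dist_eq_norm, ← integral_sub (hF.mul_bdd hψ.aestronglyMeasurable hψb)
    (hG.mul_bdd hψ.aestronglyMeasurable hψb), ← integral_const_mul]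
  refine norm_integral_le_of_norm_le ((hF.sub hG).abs.const_mul M) (ae_of_all _ fun x => ?_)
  rw [← sub_mul, norm_mul, mul_comm]
  exact mul_le_mul_of_nonneg_right (hM x) (norm_nonneg _)

variable {V : Type*} [NormedAddCommGroup V] [NormedSpace ℝ V] [FiniteDimensional ℝ V]
  [MeasurableSpace V] [BorelSpace V]

lemma exists_seq_continuous_compactSupport_dense (μ : Measure V) [IsLocallyFiniteMeasure μ] :
    ∃ Φ : ℕ → V → ℝ, (∀ j, Continuous (Φ j) ∧ HasCompactSupport (Φ j)) ∧
      ∀ F : V → ℝ, Integrable F μ → ∀ δ : ℝ, 0 < δ → ∃ j, ∫ v, |F v - Φ j v| ∂μ ≤ δ := by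
  have : ProperSpace V := FiniteDimensional.proper ℝ V
  have : Fact ((1 : ℝ≥0∞) ≠ ∞) := ⟨ENNReal.one_ne_top⟩
  let S : Set (V →₁[μ] ℝ) := {φ | ∃ (g : V → ℝ) (hg : Integrable g μ), Continuous g ∧
    HasCompactSupport g ∧ φ = hg.toL1 g}
  have : Nonempty S := ⟨⟨(integrable_zero V ℝ μ).toL1 _, 0, integrable_zero V ℝ μ,
    continuous_zero, HasCompactSupport.zero, rfl⟩⟩
  choose Φ hΦi hΦc hΦs hΦ using fun j => (TopologicalSpace.denseSeq S j).2
  refine ⟨Φ, fun j => ⟨hΦc j, hΦs j⟩, fun F hF δ hδ => ?_⟩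
  obtain ⟨g, hgs, hFg, hgc, hgi⟩ := hF.exists_hasCompactSupport_integral_sub_le (half_pos hδ)
  obtain ⟨j, hj⟩ := (TopologicalSpace.denseRange_denseSeq S).exists_dist_lt
    ⟨hgi.toL1 g, g, hgi, hgc, hgs, rfl⟩ (half_pos hδ)
  have hgΦ : ∫ v, |g v - Φ j v| ∂μ < δ / 2 := by
    rwa [Subtype.dist_eq, hΦ j, dist_eq_norm, ← Integrable.toL1_sub,
      L1.norm_of_fun_eq_integral_norm] at hj
  refine ⟨j, ?_⟩
  calc ∫ v, |F v - Φ j v| ∂μ ≤ ∫ v, (‖F v - g v‖ + |g v - Φ j v|) ∂μ :=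
        integral_mono (hF.sub (hΦi j)).abs ((hF.sub hgi).norm.add (hgi.sub (hΦi j)).abs)
          fun v => abs_sub_le _ _ _
    _ = ∫ v, ‖F v - g v‖ ∂μ + ∫ v, |g v - Φ j v| ∂μ :=
        integral_add (hF.sub hgi).norm (hgi.sub (hΦi j)).abs
    _ ≤ δ := by linarith

variable {μ : Measure V} {F ψ : V → ℝ} {M : ℝ}

lemma tendsto_integral_abs_dilation_sub [IsLocallyFiniteMeasure μ] (hF : Continuous F)
    (hFs : HasCompactSupport F) (D : ℕ) :
    Tendsto (fun s : ℝ => ∫ v, |s ^ D * F (s • v) - F v| ∂μ) (𝓝 1) (𝓝 0) := by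
  have : ProperSpace V := FiniteDimensional.proper ℝ V
  obtain ⟨R, hR0, hR⟩ := hFs.exists_pos_le_norm
  have hcont : Continuous fun s : ℝ =>
      ∫ v in closedBall (0 : V) (2 * R), |s ^ D * F (s • v) - F v| ∂μ := by
    refine continuous_parametric_integral_of_continuous ?_ (isCompact_closedBall _ _)
    simp only [Function.uncurry_def]
    fun_prop
  have hlim := hcont.tendsto 1
  simp only [one_pow, one_mul, one_smul, sub_self, abs_zero, integral_zero] at hlim
  refine hlim.congr' ?_
  filter_upwards [lt_mem_nhds (show (1 / 2 : ℝ) < 1 by norm_num)] with s hs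
  refine setIntegral_eq_integral_of_forall_compl_eq_zero fun v hv => ?_
  rw [mem_closedBall_zero_iff, not_le] at hv
  rw [hR v (by linarith), hR (s • v), mul_zero, sub_zero, abs_zero]
  rw [norm_smul, Real.norm_of_nonneg (by linarith)]
  nlinarith

variable [μ.IsAddHaarMeasure]

lemma integral_mul_comp_smul_eq_integral_dilation {s : ℝ} (hs : 0 < s) (t : ℝ) :
    ∫ v, F v * ψ (t • v) ∂μ =
      ∫ v, s ^ Module.finrank ℝ V * F (s • v) * ψ ((t * s) • v) ∂μ := by
  have hchange := Measure.integral_comp_smul_of_nonneg μ (fun v => F v * ψ (t • v)) s (hR := hs.le)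
  simp only [smul_smul, smul_eq_mul] at hchange
  simp_rw [mul_assoc, integral_const_mul, hchange]
  rw [mul_inv_cancel_left₀ (by positivity)]

/- The dilation by `r i / t i` carries the scale `t i` to `r i` and moves `F` little in `L¹`. -/
lemma tendsto_integral_mul_comp_smul_of_div_tendsto_one {ι : Type*} {L : Filter ι} {r t : ι → ℝ}
    (hF : Continuous F) (hFs : HasCompactSupport F) (hψ : Measurable ψ) (hM : ∀ v, |ψ v| ≤ M)
    (hrt : Tendsto (fun i => r i / t i) L (𝓝 1))
    (hr : Tendsto (fun i => ∫ v, F v * ψ (r i • v) ∂μ) L (𝓝 0)) :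
    Tendsto (fun i => ∫ v, F v * ψ (t i • v) ∂μ) L (𝓝 0) := by
  have : ProperSpace V := FiniteDimensional.proper ℝ V
  have hFi : Integrable F μ := hF.integrable_of_hasCompactSupport hFs
  have hdil := ((tendsto_integral_abs_dilation_sub (μ := μ) hF hFs
    (Module.finrank ℝ V)).comp hrt).const_mul M
  rw [mul_zero] at hdil
  refine hr.congr_dist (squeeze_zero' (Eventually.of_forall fun _ => dist_nonneg) ?_ hdil)
  filter_upwards [hrt.eventually (lt_mem_nhds one_pos)] with i hi
  have ht : t i ≠ 0 := fun h => by simp [h] at hi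
  rw [integral_mul_comp_smul_eq_integral_dilation hi (t i), mul_div_cancel₀ _ ht, dist_comm]
  exact dist_integral_mul_le_of_abs_le ((hFi.comp_smul hi.ne').const_mul _) hFi
    (hψ.comp (measurable_const_smul _)) fun v => hM _

lemma tendsto_floor_rpow_inv_pow_div {m : ℕ} (hm : 0 < m) :
    Tendsto (fun t : ℝ => (⌊t ^ (m : ℝ)⁻¹⌋₊ : ℝ) ^ m / t) atTop (𝓝 1) := by
  have hroot : Tendsto (fun t : ℝ => t ^ (m : ℝ)⁻¹) atTop atTop :=
    tendsto_rpow_atTop (by positivity)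
  have hfloor := ((tendsto_nat_floor_div_atTop (R := ℝ)).comp hroot).pow m
  rw [one_pow] at hfloor
  refine hfloor.congr' ?_
  filter_upwards [eventually_ge_atTop 0] with t ht
  rw [Function.comp_apply, div_pow, Real.rpow_inv_natCast_pow ht hm.ne']

/- Interpolating between the scales `k ^ m` needs only continuity of dilations in `L¹`. -/
lemma HasScalingLimit.zero_of_pow_scales {m : ℕ} (hm : 0 < m) {Φ : ℕ → V → ℝ}
    (hΦ : ∀ j, Continuous (Φ j) ∧ HasCompactSupport (Φ j))
    (hdense : ∀ F : V → ℝ, Integrable F μ → ∀ δ : ℝ, 0 < δ → ∃ j, ∫ v, |F v - Φ j v| ∂μ ≤ δ)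
    (hψ : Measurable ψ) (hM : ∀ v, |ψ v| ≤ M)
    (hpow : ∀ j, Tendsto (fun k : ℕ => ∫ v, Φ j v * ψ (((k : ℝ) ^ m) • v) ∂μ) atTop (𝓝 0)) :
    HasScalingLimit μ ψ fun _ => 0 := by
  intro F hF
  simp only [mul_zero, integral_zero]
  have hM0 : 0 ≤ M := (abs_nonneg _).trans (hM 0)
  have hroot : Tendsto (fun t : ℝ => ⌊t ^ (m : ℝ)⁻¹⌋₊) atTop atTop :=
    tendsto_nat_floor_atTop.comp (tendsto_rpow_atTop (by positivity))
  rw [Metric.tendsto_nhds]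
  intro δ hδ
  obtain ⟨j, hj⟩ := hdense F hF.integrable (δ / (2 * (M + 1))) (by positivity)
  have hΦi : Integrable (Φ j) μ := (hΦ j).1.integrable_of_hasCompactSupport (hΦ j).2
  have hΦlim := (tendsto_integral_mul_comp_smul_of_div_tendsto_one (hΦ j).1 (hΦ j).2 hψ hM
    (tendsto_floor_rpow_inv_pow_div hm) ((hpow j).comp hroot)).comp tendsto_inv_nhdsGT_zero
  filter_upwards [Metric.tendsto_nhds.1 hΦlim (δ / 2) (half_pos hδ)] with ε hε
  have hdist : dist (∫ v, F v * ψ (ε⁻¹ • v) ∂μ) (∫ v, Φ j v * ψ (ε⁻¹ • v) ∂μ) ≤ δ / 2 :=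
    calc _ ≤ M * ∫ v, |F v - Φ j v| ∂μ := dist_integral_mul_le_of_abs_le hF.integrable hΦi
          (hψ.comp (measurable_const_smul _)) fun v => hM _
      _ ≤ (M + 1) * (δ / (2 * (M + 1))) := by gcongr; linarith
      _ = δ / 2 := by field_simp
  exact (dist_triangle _ _ _).trans_lt ((add_lt_add_of_le_of_lt hdist hε).trans_eq (add_halves δ))

end PowerScales

section Covering

variable {E : Type*} [NormedAddCommGroup E] [MeasurableSpace E] [BorelSpace E] {μ : Measure E}
  [μ.IsAddHaarMeasure]

lemma setLIntegral_closedBall_comp_add_right_le (u : E → ℝ≥0∞) {R : ℝ} {z : E}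
    (hz : z ∈ closedBall 0 R) :
    ∫⁻ x in closedBall 0 R, u (x + z) ∂μ ≤ ∫⁻ x in closedBall 0 (2 * R), u x ∂μ := by
  rw [← (measurePreserving_add_right μ z).setLIntegral_comp_preimage_emb
    (measurableEmbedding_addRight z) u (closedBall 0 (2 * R))]
  refine lintegral_mono_set fun x hx => ?_
  rw [mem_preimage, mem_closedBall_zero_iff]
  rw [mem_closedBall_zero_iff] at hx hz
  linarith [norm_add_le x z]

variable [NormedSpace ℝ E] [FiniteDimensional ℝ E]

lemma mul_measure_le_lintegral_of_forall_exists_closedBall {u : E → ℝ≥0∞} {S : Set E} {T : ℝ}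
    {c : ℝ≥0∞} (hST : S ⊆ closedBall 0 T)
    (hS : ∀ x ∈ S, ∃ r : ℝ, 0 < r ∧ r ≤ T ∧
      c * μ (closedBall x r) ≤ ∫⁻ y in closedBall x r, u y ∂μ) :
    c * μ S ≤ 5 ^ Module.finrank ℝ E * ∫⁻ y in closedBall 0 (2 * T), u y ∂μ := by
  choose! r hr0 hrT hr using hS
  obtain ⟨v, hvS, hvd, hvc⟩ := Vitali.exists_disjoint_subfamily_covering_enlargement_closedBall
    S id r T hrT 5 (by norm_num)
  have hcount : v.Countable := hvd.countable_of_nonempty_interior fun a ha =>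
    ⟨a, ball_subset_interior_closedBall (mem_ball_self (hr0 a (hvS ha)))⟩
  have hcover : S ⊆ ⋃ b ∈ v, closedBall b (5 * r b) := fun a ha => by
    obtain ⟨b, hb, hab⟩ := hvc a ha
    exact mem_iUnion₂.2 ⟨b, hb, hab (mem_closedBall_self (hr0 a ha).le)⟩
  have hdilate : ∀ b ∈ v, μ (closedBall b (5 * r b)) =
      5 ^ Module.finrank ℝ E * μ (closedBall b (r b)) := fun b hb => by
    rw [Measure.addHaar_closedBall_mul μ b (by norm_num) (hr0 b (hvS hb)).le,
      ← Measure.addHaar_closedBall_center μ b, ENNReal.ofReal_pow (by norm_num),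
      ENNReal.ofReal_ofNat]
  have hinside : ⋃ b ∈ v, closedBall b (r b) ⊆ closedBall 0 (2 * T) := iUnion₂_subset fun b hb =>
    closedBall_subset_closedBall' (by linarith [hrT b (hvS hb), mem_closedBall.1 (hST (hvS hb))])
  calc c * μ S ≤ c * ∑' b : v, μ (closedBall (b : E) (5 * r b)) := by
        gcongr
        exact (measure_mono hcover).trans (measure_biUnion_le _ hcount _)
    _ = 5 ^ Module.finrank ℝ E * ∑' b : v, c * μ (closedBall (b : E) (r b)) := by
        simp_rw [← ENNReal.tsum_mul_left]
        exact tsum_congr fun b => by rw [hdilate b b.2, mul_left_comm]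
    _ ≤ 5 ^ Module.finrank ℝ E * ∑' b : v, ∫⁻ y in closedBall (b : E) (r b), u y ∂μ := by
        gcongr with b
        exact hr b (hvS b.2)
    _ = 5 ^ Module.finrank ℝ E * ∫⁻ y in ⋃ b ∈ v, closedBall (b : E) (r b), u y ∂μ := by
        congr 1
        exact (lintegral_biUnion hcount (fun _ _ => measurableSet_closedBall) hvd _).symm
    _ ≤ 5 ^ Module.finrank ℝ E * ∫⁻ y in closedBall 0 (2 * T), u y ∂μ := by
        gcongr

lemma setLIntegral_closedBall_comp_inv_smul {u : E → ℝ≥0∞} (hu : Measurable u) (R : ℝ) {ε : ℝ}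
    (hε : 0 < ε) :
    ∫⁻ x in closedBall 0 R, u (ε⁻¹ • x) ∂μ =
      ENNReal.ofReal (ε ^ Module.finrank ℝ E) * ∫⁻ x in closedBall 0 (R / ε), u x ∂μ := by
  have hball : closedBall (0 : E) R = (fun x => ε⁻¹ • x) ⁻¹' closedBall 0 (R / ε) := by
    ext x
    rw [mem_preimage, mem_closedBall_zero_iff, mem_closedBall_zero_iff, norm_smul,
      Real.norm_of_nonneg (inv_nonneg.2 hε.le), inv_mul_eq_div, div_le_div_iff_of_pos_right hε]
  rw [hball, ← setLIntegral_map measurableSet_closedBall hu (measurable_const_smul ε⁻¹),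
    Measure.map_addHaar_smul μ (inv_ne_zero hε.ne'), Measure.restrict_smul, lintegral_smul_measure,
    inv_pow, inv_inv, abs_of_pos (pow_pos hε _), smul_eq_mul]

end Covering

section MaximalFunction

variable {E : Type*} [NormedAddCommGroup E] [MeasurableSpace E] {μ : Measure E}
  {Ω : Type*} [AddAction E Ω]

/-- The maximal function of `X` along the orbits of an action of `E`, over the averages on the
balls of radius `2 ^ k`. Dyadic radii keep the supremum countable and lose only a factor
`2 ^ dim E`. -/
def dyadicMaximal (μ : Measure E) (X : Ω → ℝ≥0∞) (ω : Ω) : ℝ≥0∞ :=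
  ⨆ k : ℕ, ⨍⁻ y in closedBall 0 (2 ^ k), X (y +ᵥ ω) ∂μ

lemma dyadicMaximal_mono {X Y : Ω → ℝ≥0∞} (hXY : X ≤ Y) (ω : Ω) :
    dyadicMaximal μ X ω ≤ dyadicMaximal μ Y ω :=
  iSup_mono fun _ => lintegral_mono fun _ => hXY _

variable [MeasurableSpace Ω] {ℙ : Measure Ω} [MeasurableVAdd₂ E Ω] {X : Ω → ℝ≥0∞}

lemma measurable_setLIntegral_orbit [SFinite μ] (hX : Measurable X) (s : Set E) :
    Measurable fun ω => ∫⁻ y in s, X (y +ᵥ ω) ∂μ :=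
  (hX.comp (measurable_vadd.comp measurable_swap)).lintegral_prod_right'

lemma lintegral_setLIntegral_orbit [SFinite μ] [SFinite ℙ] [VAddInvariantMeasure E Ω ℙ]
    (hX : Measurable X) (s : Set E) :
    ∫⁻ ω, ∫⁻ y in s, X (y +ᵥ ω) ∂μ ∂ℙ = μ s * ∫⁻ ω, X ω ∂ℙ := by
  have hswap := lintegral_lintegral_swap (μ := ℙ) (ν := μ.restrict s)
    (f := fun ω y => X (y +ᵥ ω)) (hX.comp (measurable_vadd.comp measurable_swap)).aemeasurable
  rw [hswap]
  simp_rw [fun y : E => (measurePreserving_vadd y ℙ).lintegral_comp hX]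
  rw [setLIntegral_const, mul_comm]

variable [NormedSpace ℝ E] [FiniteDimensional ℝ E] [BorelSpace E] [μ.IsAddHaarMeasure]

lemma mul_measure_le_of_forall_mul_measure_orbit_le [SFinite ℙ] [VAddInvariantMeasure E Ω ℙ]
    (hX : Measurable X) {A : Set Ω} (hA : MeasurableSet A) {T : ℝ} (hT : 0 < T) {c C : ℝ≥0∞}
    (h : ∀ ω, c * μ {x ∈ closedBall (0 : E) T | x +ᵥ ω ∈ A} ≤
      C * ∫⁻ y in closedBall 0 (2 * T), X (y +ᵥ ω) ∂μ) :
    c * ℙ A ≤ C * 2 ^ Module.finrank ℝ E * ∫⁻ ω, X ω ∂ℙ := by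
  have horbit : ∀ ω, ∫⁻ y in closedBall (0 : E) T, A.indicator 1 (y +ᵥ ω) ∂μ =
      μ {x ∈ closedBall (0 : E) T | x +ᵥ ω ∈ A} := fun ω => by
    have hpre : MeasurableSet ((· +ᵥ ω) ⁻¹' A : Set E) := measurable_vadd_const ω hA
    rw [show {x ∈ closedBall (0 : E) T | x +ᵥ ω ∈ A} = (· +ᵥ ω) ⁻¹' A ∩ closedBall 0 T from
      inter_comm _ _, ← Measure.restrict_apply hpre, ← lintegral_indicator_one hpre]
    rfl
  have hpos : μ (closedBall (0 : E) T) ≠ 0 := (measure_closedBall_pos μ 0 hT).ne'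
  have hfin : μ (closedBall (0 : E) T) ≠ ∞ := measure_closedBall_lt_top.ne
  rw [← ENNReal.mul_le_mul_iff_right hpos hfin]
  calc μ (closedBall (0 : E) T) * (c * ℙ A)
      = ∫⁻ ω, c * ∫⁻ y in closedBall (0 : E) T, A.indicator 1 (y +ᵥ ω) ∂μ ∂ℙ := by
        have hind : Measurable (A.indicator (1 : Ω → ℝ≥0∞)) := measurable_one.indicator hA
        rw [lintegral_const_mul _ (measurable_setLIntegral_orbit hind _),
          lintegral_setLIntegral_orbit hind, lintegral_indicator_one hA, mul_left_comm]
    _ ≤ ∫⁻ ω, C * ∫⁻ y in closedBall (0 : E) (2 * T), X (y +ᵥ ω) ∂μ ∂ℙ :=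
        lintegral_mono fun ω => (congrArg (c * ·) (horbit ω)).trans_le (h ω)
    _ = μ (closedBall (0 : E) T) * (C * 2 ^ Module.finrank ℝ E * ∫⁻ ω, X ω ∂ℙ) := by
        rw [lintegral_const_mul _ (measurable_setLIntegral_orbit hX _),
          lintegral_setLIntegral_orbit hX, Measure.addHaar_closedBall_mul μ 0 two_pos.le hT.le,
          ENNReal.ofReal_pow two_pos.le, ENNReal.ofReal_ofNat]
        ring

/- Transference: on a fixed orbit the Vitali covering lemma applies in `E`, and stationarity
carries the estimate over to `Ω`. -/
lemma mul_measure_exists_le_setLIntegral_orbit_le [SFinite ℙ] [VAddInvariantMeasure E Ω ℙ]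
    (hX : Measurable X) (c : ℝ≥0∞) (K : ℕ) :
    c * ℙ {ω | ∃ k ≤ K, c * μ (closedBall (0 : E) (2 ^ k)) ≤
      ∫⁻ y in closedBall (0 : E) (2 ^ k), X (y +ᵥ ω) ∂μ} ≤
      10 ^ Module.finrank ℝ E * ∫⁻ ω, X ω ∂ℙ := by
  set A := {ω | ∃ k ≤ K, c * μ (closedBall (0 : E) (2 ^ k)) ≤
    ∫⁻ y in closedBall (0 : E) (2 ^ k), X (y +ᵥ ω) ∂μ} with hAdef
  have hA : MeasurableSet A := by
    simp only [hAdef, ← exists_prop, measurableSet_setOfPred]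
    refine Measurable.exists fun k => Measurable.exists fun _ => measurableSet_setOfPred.1 ?_
    exact measurableSet_le measurable_const (measurable_setLIntegral_orbit hX _)
  rw [show (10 : ℝ≥0∞) = 5 * 2 by norm_num, mul_pow]
  refine mul_measure_le_of_forall_mul_measure_orbit_le (μ := μ) hX hA (T := 2 ^ K)
    (by positivity) fun ω => mul_measure_le_lintegral_of_forall_exists_closedBall
      (fun x hx => hx.1) ?_
  rintro x ⟨-, k, hk, hx⟩
  refine ⟨2 ^ k, by positivity, pow_le_pow_right₀ one_le_two hk, ?_⟩
  have hball : (· + x) ⁻¹' closedBall x (2 ^ k) = closedBall (0 : E) (2 ^ k) := by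
    ext y; simp
  have hshift := (measurePreserving_add_right μ x).setLIntegral_comp_preimage_emb
    (measurableEmbedding_addRight x) (fun y => X (y +ᵥ ω)) (closedBall x (2 ^ k))
  rw [hball] at hshift
  simp_rw [← hshift, Measure.addHaar_closedBall_center, add_vadd]
  exact hx

lemma mul_measure_lt_dyadicMaximal_le [SFinite ℙ] [VAddInvariantMeasure E Ω ℙ]
    (hX : Measurable X) (c : ℝ≥0∞) :
    c * ℙ {ω | c < dyadicMaximal μ X ω} ≤ 10 ^ Module.finrank ℝ E * ∫⁻ ω, X ω ∂ℙ := by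
  let A : ℕ → Set Ω := fun K => {ω | ∃ k ≤ K, c * μ (closedBall (0 : E) (2 ^ k)) ≤
    ∫⁻ y in closedBall (0 : E) (2 ^ k), X (y +ᵥ ω) ∂μ}
  have hmono : Monotone A := fun K L hKL ω ⟨k, hk, hω⟩ => ⟨k, hk.trans hKL, hω⟩
  have hsub : {ω | c < dyadicMaximal μ X ω} ⊆ ⋃ K, A K := fun ω hω => by
    obtain ⟨k, hk⟩ := lt_iSup_iff.1 hω.out
    refine mem_iUnion.2 ⟨k, k, le_rfl, ?_⟩
    rw [← measure_mul_setLAverage _ measure_closedBall_lt_top.ne, mul_comm]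
    gcongr
  calc c * ℙ {ω | c < dyadicMaximal μ X ω} ≤ c * ℙ (⋃ K, A K) := by gcongr
    _ = ⨆ K, c * ℙ (A K) := by rw [hmono.measure_iUnion, ENNReal.mul_iSup]
    _ ≤ 10 ^ Module.finrank ℝ E * ∫⁻ ω, X ω ∂ℙ :=
        iSup_le fun K => mul_measure_exists_le_setLIntegral_orbit_le hX c K

lemma ae_tendsto_dyadicMaximal_zero [SFinite ℙ] [VAddInvariantMeasure E Ω ℙ]
    {X : ℕ → Ω → ℝ≥0∞} (hX : ∀ n, Measurable (X n)) (hanti : Antitone X)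
    (hlim : Tendsto (fun n => ∫⁻ ω, X n ω ∂ℙ) atTop (𝓝 0)) :
    ∀ᵐ ω ∂ℙ, Tendsto (fun n => dyadicMaximal μ (X n) ω) atTop (𝓝 0) := by
  have hnull : ∀ m : ℕ, ∀ᵐ ω ∂ℙ, ∃ n, dyadicMaximal μ (X n) ω ≤ (m : ℝ≥0∞)⁻¹ := by
    intro m
    have hbound : ∀ n, (m : ℝ≥0∞)⁻¹ * ℙ {ω | ∀ n, (m : ℝ≥0∞)⁻¹ < dyadicMaximal μ (X n) ω} ≤
        10 ^ Module.finrank ℝ E * ∫⁻ ω, X n ω ∂ℙ := fun n =>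
      le_trans (by gcongr; exact fun hω => hω n) (mul_measure_lt_dyadicMaximal_le (hX n) _)
    have hzero := ge_of_tendsto' (ENNReal.Tendsto.const_mul hlim (Or.inr (by finiteness))) hbound
    rw [mul_zero, nonpos_iff_eq_zero, mul_eq_zero] at hzero
    simpa only [ae_iff, not_exists, not_le] using
      hzero.resolve_left (ENNReal.inv_ne_zero.2 (ENNReal.natCast_ne_top m))
  filter_upwards [ae_all_iff.2 hnull] with ω hω
  refine ENNReal.tendsto_atTop_zero.2 fun δ hδ => ?_
  obtain ⟨m, hm⟩ := ENNReal.exists_inv_nat_lt hδ.ne'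
  obtain ⟨n, hn⟩ := hω m
  exact ⟨n, fun k hk => (dyadicMaximal_mono (hanti hk) ω).trans (hn.trans hm.le)⟩

lemma setLIntegral_orbit_inv_smul_le (hX : Measurable X) (ω : Ω) {R ε : ℝ} (hε : 0 < ε)
    (hεR : ε ≤ R) :
    ∫⁻ x in closedBall (0 : E) R, X ((ε⁻¹ • x) +ᵥ ω) ∂μ ≤
      2 ^ Module.finrank ℝ E * μ (closedBall (0 : E) R) * dyadicMaximal μ X ω := by
  obtain ⟨k, hk, hk'⟩ := exists_nat_pow_near ((one_le_div hε).2 hεR) one_lt_two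
  have hpow : (2 : ℝ) ^ (k + 1) ≤ 2 / ε * R := by
    rw [pow_succ, mul_comm, div_mul_eq_mul_div, mul_div_assoc]
    gcongr
  calc ∫⁻ x in closedBall (0 : E) R, X ((ε⁻¹ • x) +ᵥ ω) ∂μ
      = ENNReal.ofReal (ε ^ Module.finrank ℝ E) *
          ∫⁻ x in closedBall (0 : E) (R / ε), X (x +ᵥ ω) ∂μ :=
        setLIntegral_closedBall_comp_inv_smul (hX.comp (measurable_vadd_const ω)) R hε
    _ ≤ ENNReal.ofReal (ε ^ Module.finrank ℝ E) *
          ∫⁻ x in closedBall (0 : E) (2 ^ (k + 1)), X (x +ᵥ ω) ∂μ := by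
        gcongr
    _ ≤ ENNReal.ofReal (ε ^ Module.finrank ℝ E) *
          (μ (closedBall (0 : E) (2 / ε * R)) * dyadicMaximal μ X ω) := by
        rw [← measure_mul_setLAverage _ measure_closedBall_lt_top.ne]
        gcongr
        exact le_iSup (fun k : ℕ => ⨍⁻ y in closedBall (0 : E) (2 ^ k), X (y +ᵥ ω) ∂μ) (k + 1)
    _ = 2 ^ Module.finrank ℝ E * μ (closedBall (0 : E) R) * dyadicMaximal μ X ω := by
        rw [Measure.addHaar_closedBall_mul_of_pos μ 0 (by positivity), ← mul_assoc, ← mul_assoc,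
          ← ENNReal.ofReal_mul (by positivity), ← mul_pow, mul_div_cancel₀ _ hε.ne',
          ENNReal.ofReal_pow two_pos.le, ENNReal.ofReal_ofNat]

lemma setLIntegral_prod_orbit_inv_smul_le (hX : Measurable X) (ω : Ω) {R ε : ℝ} (hε : 0 < ε)
    (hεR : ε ≤ R) :
    ∫⁻ q in closedBall (0 : E × E) R,
        (X ((ε⁻¹ • q.1) +ᵥ ω) + X ((ε⁻¹ • (q.1 + q.2)) +ᵥ ω)) ∂(μ.prod μ) ≤
      2 * μ (closedBall (0 : E) R) * (2 ^ Module.finrank ℝ E * μ (closedBall (0 : E) (2 * R))) *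
        dyadicMaximal μ X ω := by
  have hu : Measurable fun x : E => X ((ε⁻¹ • x) +ᵥ ω) :=
    hX.comp ((measurable_vadd_const ω).comp (measurable_const_smul ε⁻¹))
  have hfst : ∫⁻ x in closedBall (0 : E) R, X ((ε⁻¹ • x) +ᵥ ω) ∂μ ≤
      ∫⁻ x in closedBall (0 : E) (2 * R), X ((ε⁻¹ • x) +ᵥ ω) ∂μ :=
    lintegral_mono_set (closedBall_subset_closedBall (by linarith))
  set I := ∫⁻ x in closedBall (0 : E) (2 * R), X ((ε⁻¹ • x) +ᵥ ω) ∂μ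
  have hI : I ≤ 2 ^ Module.finrank ℝ E * μ (closedBall (0 : E) (2 * R)) * dyadicMaximal μ X ω :=
    setLIntegral_orbit_inv_smul_le hX ω hε (by linarith)
  have hprod : closedBall (0 : E × E) R = closedBall 0 R ×ˢ closedBall 0 R :=
    (closedBall_prod_same (0 : E) (0 : E) R).symm
  calc _ = ∫⁻ z in closedBall (0 : E) R, ∫⁻ x in closedBall (0 : E) R,
        (X ((ε⁻¹ • x) +ᵥ ω) + X ((ε⁻¹ • (x + z)) +ᵥ ω)) ∂μ ∂μ := by
        rw [hprod, ← Measure.prod_restrict]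
        exact lintegral_prod_symm _ ((hu.comp measurable_fst).add
          (hu.comp (measurable_fst.add measurable_snd))).aemeasurable
    _ ≤ ∫⁻ _ in closedBall (0 : E) R, 2 * I ∂μ :=
        setLIntegral_mono measurable_const fun z hz => by
          rw [lintegral_add_left hu, two_mul]
          exact add_le_add hfst (setLIntegral_closedBall_comp_add_right_le _ hz)
    _ ≤ 2 * μ (closedBall (0 : E) R) *
        (2 ^ Module.finrank ℝ E * μ (closedBall (0 : E) (2 * R))) * dyadicMaximal μ X ω := by
        rw [setLIntegral_const, mul_right_comm, mul_assoc (2 * _)]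
        gcongr

end MaximalFunction

section LawOfLargeNumbers

lemma setLIntegral_enorm_rpow_neg_lt_top {E : Type*} [NormedAddCommGroup E] [NormedSpace ℝ E]
    [FiniteDimensional ℝ E] [Nontrivial E] [MeasurableSpace E] [BorelSpace E] {μ : Measure E}
    [μ.IsAddHaarMeasure] {s : ℝ} (hs : s < Module.finrank ℝ E) (R : ℝ) :
    ∫⁻ x in closedBall (0 : E) R, ‖x‖ₑ ^ (-s) ∂μ < ∞ := by
  have hdim : 1 ≤ Module.finrank ℝ E := Module.finrank_pos
  have hradial : IntegrableOn (fun x : E => ‖x‖ ^ (-s)) (ball 0 (|R| + 1)) μ := by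
    rw [integrableOn_fun_norm_addHaar μ (f := fun y => y ^ (-s))]
    refine ((intervalIntegral.integrableOn_Ioo_rpow_iff (t := |R| + 1) (by positivity)
      (s := ((Module.finrank ℝ E - 1 : ℕ) : ℝ) - s)).2 ?_).congr_fun (fun y hy => ?_)
      measurableSet_Ioo
    · push_cast [hdim]
      linarith
    · simp [sub_eq_add_neg, Real.rpow_add hy.1, Real.rpow_natCast]
  calc ∫⁻ x in closedBall (0 : E) R, ‖x‖ₑ ^ (-s) ∂μ
      ≤ ∫⁻ x in ball (0 : E) (|R| + 1), ‖x‖ₑ ^ (-s) ∂μ :=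
        lintegral_mono_set (closedBall_subset_ball (by linarith [le_abs_self R]))
    _ = ∫⁻ x in ball (0 : E) (|R| + 1), ‖‖x‖ ^ (-s)‖ₑ ∂μ := by
        refine lintegral_congr_ae ?_
        filter_upwards [ae_restrict_of_ae (Measure.ae_ne μ 0)] with x hx
        rw [Real.enorm_of_nonneg (by positivity), ← ENNReal.ofReal_rpow_of_pos (norm_pos_iff.2 hx),
          ofReal_norm]
    _ < ∞ := hradial.2

lemma lintegral_enorm_integral_sq_le {Ω Q : Type*} [MeasurableSpace Ω] [MeasurableSpace Q]
    {ℙ : Measure Ω} {ρ : Measure Q} [SFinite ℙ] [SFinite ρ] {G : Q → Ω → ℝ}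
    (hG : Integrable (fun p : Ω × Q × Q => G p.2.1 p.1 * G p.2.2 p.1) (ℙ.prod (ρ.prod ρ))) :
    ∫⁻ ω, ‖∫ q, G q ω ∂ρ‖ₑ ^ 2 ∂ℙ ≤ ∫⁻ r, ‖∫ ω, G r.1 ω * G r.2 ω ∂ℙ‖ₑ ∂(ρ.prod ρ) := by
  have hsq : ∀ ω, (∫ q, G q ω ∂ρ) ^ 2 = ∫ r : Q × Q, G r.1 ω * G r.2 ω ∂(ρ.prod ρ) := fun ω => by
    rw [integral_prod_mul (fun q => G q ω) fun q => G q ω, sq]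
  calc ∫⁻ ω, ‖∫ q, G q ω ∂ρ‖ₑ ^ 2 ∂ℙ
      = ∫⁻ ω, ENNReal.ofReal ((∫ q, G q ω ∂ρ) ^ 2) ∂ℙ := by
        simp_rw [← enorm_pow, Real.enorm_of_nonneg (sq_nonneg _)]
    _ = ENNReal.ofReal (∫ ω, (∫ q, G q ω ∂ρ) ^ 2 ∂ℙ) := by
        refine (ofReal_integral_eq_lintegral_ofReal ?_ (ae_of_all _ fun _ => sq_nonneg _)).symm
        simpa only [hsq] using hG.integral_prod_left
    _ = ENNReal.ofReal (∫ r : Q × Q, ∫ ω, G r.1 ω * G r.2 ω ∂ℙ ∂(ρ.prod ρ)) := by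
        simp only [hsq]
        rw [integral_integral_swap hG]
    _ ≤ ‖∫ r : Q × Q, ∫ ω, G r.1 ω * G r.2 ω ∂ℙ ∂(ρ.prod ρ)‖ₑ := Real.ofReal_le_enorm _
    _ ≤ ∫⁻ r, ‖∫ ω, G r.1 ω * G r.2 ω ∂ℙ‖ₑ ∂(ρ.prod ρ) := enorm_integral_le_lintegral_enorm _

lemma ae_tendsto_zero_of_tsum_lintegral_sq_ne_top {Ω : Type*} [MeasurableSpace Ω] {ℙ : Measure Ω}
    {f : ℕ → Ω → ℝ} (hf : ∀ k, Measurable (f k)) (hsum : ∑' k, ∫⁻ ω, ‖f k ω‖ₑ ^ 2 ∂ℙ ≠ ∞) :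
    ∀ᵐ ω ∂ℙ, Tendsto (fun k => f k ω) atTop (𝓝 0) := by
  have hmeas : ∀ k, Measurable fun ω => ‖f k ω‖ₑ ^ 2 := fun k => (hf k).enorm.pow_const 2
  rw [← lintegral_tsum fun k => (hmeas k).aemeasurable] at hsum
  filter_upwards [ae_lt_top (Measurable.tsum hmeas) hsum] with ω hω
  have hsq := ENNReal.tendsto_atTop_zero_of_tsum_ne_top hω.ne
  rw [tendsto_zero_iff_enorm_tendsto_zero]
  simpa only [← ENNReal.rpow_natCast, Nat.cast_ofNat, ← ENNReal.rpow_mul, mul_inv_cancel₀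
    (two_ne_zero' ℝ), ENNReal.rpow_one, ENNReal.zero_rpow_of_pos (inv_pos.2 (zero_lt_two' ℝ))]
    using hsq.ennrpow_const 2⁻¹

lemma tsum_enorm_natCast_add_one_pow_rpow_neg_ne_top {m : ℕ} {s : ℝ} (hms : 1 < m * s) :
    ∑' k : ℕ, ‖((k + 1 : ℕ) : ℝ) ^ m‖ₑ ^ (-s) ≠ ∞ := by
  have hterm : ∀ k : ℕ, ‖((k + 1 : ℕ) : ℝ) ^ m‖ₑ ^ (-s) =
      ENNReal.ofReal (((k + 1 : ℕ) : ℝ) ^ (-(m * s))) := fun k => by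
    rw [Real.enorm_of_nonneg (by positivity), ENNReal.ofReal_rpow_of_pos (by positivity),
      ← Real.rpow_natCast, ← Real.rpow_mul (by positivity), mul_neg]
  simp_rw [hterm]
  exact ((summable_nat_add_iff 1).2
    (Real.summable_nat_rpow.2 (neg_lt_neg hms))).tsum_ofReal_ne_top

variable {E : Type*} [NormedAddCommGroup E] [MeasurableSpace E] {μ : Measure E}
  {Ω : Type*} [MeasurableSpace Ω] {ℙ : Measure Ω} [AddAction E Ω] [MeasurableVAdd₂ E Ω]

lemma integral_mul_orbit [VAddInvariantMeasure E Ω ℙ] (φ : E → Ω → ℝ) (x y z₁ z₂ : E) :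
    ∫ ω, φ z₁ (x +ᵥ ω) * φ z₂ (y +ᵥ ω) ∂ℙ = ∫ ω, φ z₁ ω * φ z₂ ((y - x) +ᵥ ω) ∂ℙ := by
  simpa only [vadd_vadd, sub_add_cancel] using (measurePreserving_vadd x ℙ).integral_comp
    (measurableEmbedding_const_vadd x) fun ω => φ z₁ ω * φ z₂ ((y - x) +ᵥ ω)

variable {φ : E → Ω → ℝ}

lemma measurable_orbit_prod (hφ : Measurable (Function.uncurry φ)) (ω : Ω) :
    Measurable fun q : E × E => φ q.2 (q.1 +ᵥ ω) :=
  hφ.comp (measurable_snd.prodMk ((measurable_vadd_const ω).comp measurable_fst))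

variable [NormedSpace ℝ E] [BorelSpace E]

lemma measurable_orbit_smul (hφ : Measurable (Function.uncurry φ)) (t : ℝ) :
    Measurable fun p : Ω × (E × E) => φ (t • p.2.2) ((t • p.2.1) +ᵥ p.1) :=
  hφ.comp (Measurable.prodMk (by fun_prop)
    (measurable_vadd.comp (Measurable.prodMk (by fun_prop) measurable_fst)))

variable [FiniteDimensional ℝ E] [μ.IsAddHaarMeasure]

lemma setLIntegral_prod_enorm_sub_rpow_le {R : ℝ} {x : E} (hx : x ∈ closedBall 0 R) (p : ℝ) :
    ∫⁻ q in closedBall (0 : E × E) R, ‖q.1 - x‖ₑ ^ p ∂(μ.prod μ) ≤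
      (∫⁻ y in closedBall (0 : E) (2 * R), ‖y‖ₑ ^ p ∂μ) * μ (closedBall (0 : E) R) := by
  have hball : closedBall (0 : E × E) R = closedBall 0 R ×ˢ closedBall 0 R :=
    (closedBall_prod_same (0 : E) (0 : E) R).symm
  have hx' : -x ∈ closedBall (0 : E) R := by simpa using hx
  have hfubini := lintegral_prod_mul (μ := μ.restrict (closedBall (0 : E) R))
    (ν := μ.restrict (closedBall (0 : E) R)) (f := fun y => ‖y + -x‖ₑ ^ p) (g := fun _ => 1)
    (by fun_prop) aemeasurable_const
  rw [hball, ← Measure.prod_restrict]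
  simp only [mul_one, lintegral_const, one_mul, Measure.restrict_apply_univ] at hfubini
  simp only [sub_eq_add_neg, hfubini]
  gcongr ?_ * _
  exact setLIntegral_closedBall_comp_add_right_le (fun y => ‖y‖ₑ ^ p) hx'

lemma lintegral_potential_le {F : E × E → ℝ} {M R : ℝ} (hM : ∀ q, |F q| ≤ M)
    (hR : ∀ q ∉ closedBall (0 : E × E) R, F q = 0) {x : E} (hx : x ∈ closedBall 0 R) (p : ℝ) :
    ∫⁻ q, ‖F q‖ₑ * ‖q.1 - x‖ₑ ^ p ∂(μ.prod μ) ≤ ENNReal.ofReal M *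
      ((∫⁻ y in closedBall (0 : E) (2 * R), ‖y‖ₑ ^ p ∂μ) * μ (closedBall (0 : E) R)) := by
  calc ∫⁻ q, ‖F q‖ₑ * ‖q.1 - x‖ₑ ^ p ∂(μ.prod μ)
      ≤ ∫⁻ q in closedBall (0 : E × E) R, ENNReal.ofReal M * ‖q.1 - x‖ₑ ^ p ∂(μ.prod μ) := by
        rw [← lintegral_indicator measurableSet_closedBall]
        refine lintegral_mono (le_indicator (fun q _ => ?_) fun q hq => ?_)
        · rw [← ofReal_norm (F q)]
          gcongr
          exact hM q
        · simp [hR q hq]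
    _ ≤ _ := by
        rw [lintegral_const_mul _ (by fun_prop)]
        gcongr
        exact setLIntegral_prod_enorm_sub_rpow_le hx p

lemma lintegral_energy_lt_top [Nontrivial E] {F : E × E → ℝ} (hF : IsTestFunction F) {s : ℝ}
    (hs : s < Module.finrank ℝ E) :
    ∫⁻ r : (E × E) × (E × E), ‖F r.1‖ₑ * ‖F r.2‖ₑ * ‖r.2.1 - r.1.1‖ₑ ^ (-s)
      ∂((μ.prod μ).prod (μ.prod μ)) < ∞ := by
  obtain ⟨M, hM⟩ := hF.bounded
  obtain ⟨R, -, hR⟩ := hF.hasCompactSupport.exists_pos_le_norm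
  have hzero : ∀ q ∉ closedBall (0 : E × E) R, F q = 0 := fun q hq =>
    hR q (not_le.1 (mt mem_closedBall_zero_iff.2 hq)).le
  set K := ENNReal.ofReal M *
    ((∫⁻ x in closedBall (0 : E) (2 * R), ‖x‖ₑ ^ (-s) ∂μ) * μ (closedBall (0 : E) R))
  have hKfin : K < ∞ := ENNReal.mul_lt_top ENNReal.ofReal_lt_top
    (ENNReal.mul_lt_top (setLIntegral_enorm_rpow_neg_lt_top hs _) measure_closedBall_lt_top)
  have hFm := hF.measurable
  calc _ = ∫⁻ q : E × E, ‖F q‖ₑ * ∫⁻ q' : E × E, ‖F q'‖ₑ * ‖q'.1 - q.1‖ₑ ^ (-s) ∂(μ.prod μ)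
        ∂(μ.prod μ) := by
        rw [lintegral_prod _ (by fun_prop)]
        refine lintegral_congr fun q => ?_
        simp_rw [mul_assoc]
        exact lintegral_const_mul _ (by fun_prop)
    _ ≤ ∫⁻ q : E × E, ‖F q‖ₑ * K ∂(μ.prod μ) := lintegral_mono fun q => by
        by_cases hq : q ∈ closedBall (0 : E × E) R
        · have hq1 : q.1 ∈ closedBall (0 : E) R :=
            mem_closedBall_zero_iff.2 ((norm_fst_le q).trans (mem_closedBall_zero_iff.1 hq))
          exact mul_le_mul_right (lintegral_potential_le hM hzero hq1 (-s)) _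
        · simp [hzero q hq]
    _ < ∞ := by
        rw [lintegral_mul_const' _ _ hKfin.ne]
        exact ENNReal.mul_lt_top hF.integrable.2 hKfin

lemma lintegral_enorm_integral_orbit_sq_le [IsFiniteMeasure ℙ]
    [VAddInvariantMeasure E Ω ℙ] (hφ : Measurable (Function.uncurry φ)) {M : ℝ}
    (hM : ∀ z ω, |φ z ω| ≤ M) {C : NNReal} {s : ℝ}
    (hcov : ∀ x z₁ z₂ : E, ‖∫ ω, φ z₁ ω * φ z₂ (x +ᵥ ω) ∂ℙ‖ₑ ≤ C * ‖x‖ₑ ^ (-s))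
    {F : E × E → ℝ} (hF : Integrable F (μ.prod μ)) {t : ℝ} (ht : t ≠ 0) :
    ∫⁻ ω, ‖∫ q, F q * φ (t • q.2) ((t • q.1) +ᵥ ω) ∂(μ.prod μ)‖ₑ ^ 2 ∂ℙ ≤
      C * ‖t‖ₑ ^ (-s) * ∫⁻ r : (E × E) × (E × E), ‖F r.1‖ₑ * ‖F r.2‖ₑ * ‖r.2.1 - r.1.1‖ₑ ^ (-s)
        ∂((μ.prod μ).prod (μ.prod μ)) := by
  have hφt := measurable_orbit_smul hφ t
  have hint : Integrable (fun p : Ω × (E × E) × (E × E) =>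
      (F p.2.1 * φ (t • p.2.1.2) ((t • p.2.1.1) +ᵥ p.1)) *
        (F p.2.2 * φ (t • p.2.2.2) ((t • p.2.2.1) +ᵥ p.1)))
      (ℙ.prod ((μ.prod μ).prod (μ.prod μ))) := by
    have hFF := (hF.mul_prod hF).comp_snd ℙ
    refine (hFF.mul_bdd (c := M * M) (g := fun p => φ (t • p.2.1.2) ((t • p.2.1.1) +ᵥ p.1) *
      φ (t • p.2.2.2) ((t • p.2.2.1) +ᵥ p.1)) ?_ (ae_of_all _ fun p => ?_)).congr
      (ae_of_all _ fun p => mul_mul_mul_comm _ _ _ _)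
    · exact ((hφt.comp (measurable_fst.prodMk (by fun_prop))).mul
        (hφt.comp (measurable_fst.prodMk (by fun_prop)))).aestronglyMeasurable
    · rw [norm_mul]
      exact mul_le_mul (hM _ _) (hM _ _) (norm_nonneg _) ((abs_nonneg _).trans (hM 0 p.1))
  have hcorr : ∀ r : (E × E) × (E × E),
      ‖∫ ω, (F r.1 * φ (t • r.1.2) ((t • r.1.1) +ᵥ ω)) *
        (F r.2 * φ (t • r.2.2) ((t • r.2.1) +ᵥ ω)) ∂ℙ‖ₑ ≤
      C * ‖t‖ₑ ^ (-s) * (‖F r.1‖ₑ * ‖F r.2‖ₑ * ‖r.2.1 - r.1.1‖ₑ ^ (-s)) := fun r => by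
    simp_rw [mul_mul_mul_comm (F r.1)]
    rw [integral_const_mul, integral_mul_orbit φ, enorm_mul, enorm_mul, ← smul_sub]
    calc _ ≤ ‖F r.1‖ₑ * ‖F r.2‖ₑ * (C * ‖t • (r.2.1 - r.1.1)‖ₑ ^ (-s)) := by
          gcongr
          exact hcov _ _ _
      _ = C * ‖t‖ₑ ^ (-s) * (‖F r.1‖ₑ * ‖F r.2‖ₑ * ‖r.2.1 - r.1.1‖ₑ ^ (-s)) := by
          rw [enorm_smul, ENNReal.mul_rpow_of_ne_top enorm_ne_top enorm_ne_top]
          ring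
  refine (lintegral_enorm_integral_sq_le hint).trans ?_
  refine (lintegral_mono hcorr).trans ?_
  rw [lintegral_const_mul']
  exact ENNReal.mul_ne_top ENNReal.coe_ne_top
    (ENNReal.rpow_ne_top_of_ne_zero (enorm_ne_zero.2 ht) enorm_ne_top)

lemma ae_tendsto_integral_orbit_pow_zero [Nontrivial E] [IsFiniteMeasure ℙ]
    [VAddInvariantMeasure E Ω ℙ] (hφ : Measurable (Function.uncurry φ)) {M : ℝ}
    (hM : ∀ z ω, |φ z ω| ≤ M) {C : NNReal} {s : ℝ} (hs : s < Module.finrank ℝ E)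
    (hcov : ∀ x z₁ z₂ : E, ‖∫ ω, φ z₁ ω * φ z₂ (x +ᵥ ω) ∂ℙ‖ₑ ≤ C * ‖x‖ₑ ^ (-s))
    {F : E × E → ℝ} (hF : IsTestFunction F) {m : ℕ} (hms : 1 < m * s) :
    ∀ᵐ ω ∂ℙ, Tendsto (fun k : ℕ => ∫ q, F q * φ (((k : ℝ) ^ m) • q.2)
      ((((k : ℝ) ^ m) • q.1) +ᵥ ω) ∂(μ.prod μ)) atTop (𝓝 0) := by
  let f : ℕ → Ω → ℝ := fun k ω =>
    ∫ q, F q * φ (((k : ℝ) ^ m) • q.2) ((((k : ℝ) ^ m) • q.1) +ᵥ ω) ∂(μ.prod μ)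
  have hf : ∀ k, Measurable (f k) := fun k =>
    ((hF.measurable.comp measurable_snd).mul
      (measurable_orbit_smul hφ _)).stronglyMeasurable.integral_prod_right'.measurable
  have hsum : ∑' k, ∫⁻ ω, ‖f (k + 1) ω‖ₑ ^ 2 ∂ℙ ≠ ∞ := by
    refine ne_top_of_le_ne_top ?_ (ENNReal.tsum_le_tsum fun k =>
      lintegral_enorm_integral_orbit_sq_le hφ hM hcov hF.integrable (by positivity))
    rw [ENNReal.tsum_mul_right, ENNReal.tsum_mul_left]
    exact ENNReal.mul_ne_top (ENNReal.mul_ne_top ENNReal.coe_ne_top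
      (tsum_enorm_natCast_add_one_pow_rpow_neg_ne_top hms)) (lintegral_energy_lt_top hF hs).ne
  filter_upwards [ae_tendsto_zero_of_tsum_lintegral_sq_ne_top (fun k => hf (k + 1)) hsum] with ω hω
  exact (tendsto_add_atTop_iff_nat 1).1 hω

lemma ae_hasScalingLimit_zero_of_correlation_le [Nontrivial E] [IsFiniteMeasure ℙ]
    [VAddInvariantMeasure E Ω ℙ] (hφ : Measurable (Function.uncurry φ)) {M : ℝ}
    (hM : ∀ z ω, |φ z ω| ≤ M) {C : NNReal} {s : ℝ} (hs0 : 0 < s) (hs : s < Module.finrank ℝ E)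
    (hcov : ∀ x z₁ z₂ : E, ‖∫ ω, φ z₁ ω * φ z₂ (x +ᵥ ω) ∂ℙ‖ₑ ≤ C * ‖x‖ₑ ^ (-s)) :
    ∀ᵐ ω ∂ℙ, HasScalingLimit (μ.prod μ) (fun q : E × E => φ q.2 (q.1 +ᵥ ω)) fun _ => 0 := by
  obtain ⟨Φ, hΦ, hdense⟩ := exists_seq_continuous_compactSupport_dense (μ.prod μ)
  obtain ⟨m, hm⟩ := exists_nat_gt (1 / s)
  have hm0 : 0 < m := Nat.cast_pos.1 ((one_div_pos.2 hs0).trans hm)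
  have hpow := ae_all_iff.2 fun j => ae_tendsto_integral_orbit_pow_zero (μ := μ) hφ hM hs hcov
    (.of_continuous (hΦ j).1 (hΦ j).2) ((div_lt_iff₀ hs0).1 hm)
  filter_upwards [hpow] with ω hω
  exact HasScalingLimit.zero_of_pow_scales hm0 hΦ hdense (measurable_orbit_prod hφ ω)
    (fun q => hM q.2 (q.1 +ᵥ ω)) hω

end LawOfLargeNumbers

section Mixing

variable {E : Type*} [NormedAddCommGroup E] {Ω : Type*} [MeasurableSpace Ω]
  {ℙ : Measure Ω} [AddAction E Ω] {φ : E → Ω → ℝ} {l : ℝ}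

/-- Polynomial decay of correlations along the orbits: the covariance of `φ z₁` and of `φ z₂`
shifted by `x` is at most `C (1 ∧ ‖x‖ ^ (-l))`, uniformly in `z₁` and `z₂`. The second bound is
restricted to `x ≠ 0` because `(0 : ℝ) ^ (-l) = 0`. -/
def HasPolynomialMixing (ℙ : Measure Ω) (l : ℝ) (φ : E → Ω → ℝ) : Prop :=
  ∃ C : ℝ, ∀ x z₁ z₂ : E,
    |(∫ ω, φ z₁ ω * φ z₂ (x +ᵥ ω) ∂ℙ) - (∫ ω, φ z₁ ω ∂ℙ) * ∫ ω, φ z₂ ω ∂ℙ| ≤ C ∧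
    (x ≠ 0 → |(∫ ω, φ z₁ ω * φ z₂ (x +ᵥ ω) ∂ℙ) - (∫ ω, φ z₁ ω ∂ℙ) * ∫ ω, φ z₂ ω ∂ℙ| ≤
      C * ‖x‖ ^ (-l))

lemma HasPolynomialMixing.exists_enorm_covariance_le (h : HasPolynomialMixing ℙ l φ) {s : ℝ}
    (hs0 : 0 < s) (hsl : s ≤ l) :
    ∃ C : NNReal, ∀ x z₁ z₂ : E,
      ‖(∫ ω, φ z₁ ω * φ z₂ (x +ᵥ ω) ∂ℙ) - (∫ ω, φ z₁ ω ∂ℙ) * ∫ ω, φ z₂ ω ∂ℙ‖ₑ ≤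
        C * ‖x‖ₑ ^ (-s) := by
  obtain ⟨C, hC⟩ := h
  have hC0 : 0 ≤ C := (abs_nonneg _).trans (hC 0 0 0).1
  refine ⟨C.toNNReal + 1, fun x z₁ z₂ => ?_⟩
  obtain rfl | hx := eq_or_ne x 0
  · simp [ENNReal.zero_rpow_of_neg (neg_lt_zero.2 hs0)]
  have hdecay : min 1 (‖x‖ ^ (-l)) ≤ ‖x‖ ^ (-s) := by
    obtain hx1 | hx1 := le_total ‖x‖ 1
    · exact min_le_of_left_le (Real.one_le_rpow_of_pos_of_le_one_of_nonpos (norm_pos_iff.2 hx) hx1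
        (neg_nonpos.2 hs0.le))
    · exact min_le_of_right_le (Real.rpow_le_rpow_of_exponent_le hx1 (neg_le_neg hsl))
  have hbound : |(∫ ω, φ z₁ ω * φ z₂ (x +ᵥ ω) ∂ℙ) - (∫ ω, φ z₁ ω ∂ℙ) * ∫ ω, φ z₂ ω ∂ℙ| ≤
      C * ‖x‖ ^ (-s) := by
    refine le_trans ?_ (mul_le_mul_of_nonneg_left hdecay hC0)
    rw [mul_min_of_nonneg _ _ hC0, mul_one]
    exact le_min (hC x z₁ z₂).1 ((hC x z₁ z₂).2 hx)
  calc _ ≤ ENNReal.ofReal (C * ‖x‖ ^ (-s)) := by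
        rw [← ofReal_norm]
        exact ENNReal.ofReal_le_ofReal hbound
    _ = C.toNNReal * ‖x‖ₑ ^ (-s) := by
        rw [ENNReal.ofReal_mul hC0, ← ENNReal.ofReal_rpow_of_pos (norm_pos_iff.2 hx), ofReal_norm]
        rfl
    _ ≤ (C.toNNReal + 1 : NNReal) * ‖x‖ₑ ^ (-s) := by
        gcongr
        exact le_self_add

variable [MeasurableSpace E] [MeasurableVAdd₂ E Ω]

lemma integral_centered_mul_orbit [IsProbabilityMeasure ℙ] [VAddInvariantMeasure E Ω ℙ]
    (hφ : ∀ z, Measurable (φ z)) {M : ℝ} (hM : ∀ z ω, |φ z ω| ≤ M) (x z₁ z₂ : E) :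
    ∫ ω, (φ z₁ ω - ∫ ω', φ z₁ ω' ∂ℙ) * (φ z₂ (x +ᵥ ω) - ∫ ω', φ z₂ ω' ∂ℙ) ∂ℙ =
      (∫ ω, φ z₁ ω * φ z₂ (x +ᵥ ω) ∂ℙ) - (∫ ω, φ z₁ ω ∂ℙ) * ∫ ω, φ z₂ ω ∂ℙ := by
  have hmem : ∀ z, MemLp (φ z) 2 ℙ := fun z =>
    MemLp.of_bound (hφ z).aestronglyMeasurable M (ae_of_all _ (hM z))
  have hshift := measurePreserving_vadd x ℙ
  have hmean : ∫ ω, φ z₂ (x +ᵥ ω) ∂ℙ = ∫ ω, φ z₂ ω ∂ℙ := by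
    exact hshift.integral_comp (measurableEmbedding_const_vadd x) _
  simpa only [ProbabilityTheory.covariance, hmean, Pi.mul_apply, Function.comp_apply] using
    ProbabilityTheory.covariance_eq_sub (hmem z₁) ((hmem z₂).comp_measurePreserving hshift)

variable [NormedSpace ℝ E] [FiniteDimensional ℝ E] [Nontrivial E] [BorelSpace E] {μ : Measure E}
  [μ.IsAddHaarMeasure]

lemma HasPolynomialMixing.ae_hasScalingLimit_zero [IsProbabilityMeasure ℙ]
    [VAddInvariantMeasure E Ω ℙ] (h : HasPolynomialMixing ℙ l φ) (hl : 0 < l)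
    (hφ : Measurable (Function.uncurry φ)) {M : ℝ} (hM : ∀ z ω, |φ z ω| ≤ M) :
    ∀ᵐ ω ∂ℙ, HasScalingLimit (μ.prod μ)
      (fun q : E × E => φ q.2 (q.1 +ᵥ ω) - ∫ ω', φ q.2 ω' ∂ℙ) fun _ => 0 := by
  have hs0 : 0 < min l (1 / 2) := lt_min hl one_half_pos
  obtain ⟨C, hC⟩ := h.exists_enorm_covariance_le hs0 (min_le_left l (1 / 2))
  have hmean : Measurable fun z => ∫ ω', φ z ω' ∂ℙ :=
    hφ.stronglyMeasurable.integral_prod_right'.measurable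
  have hdim : (1 : ℝ) ≤ Module.finrank ℝ E := by exact_mod_cast Module.finrank_pos
  refine ae_hasScalingLimit_zero_of_correlation_le (C := C)
    (φ := fun z ω => φ z ω - ∫ ω', φ z ω' ∂ℙ) (hφ.sub (hmean.comp measurable_fst)) (M := M + M)
    (fun z ω => ?_) hs0 (lt_of_le_of_lt (min_le_right _ _) (by linarith)) fun x z₁ z₂ => ?_
  · have hmean_le : |∫ ω', φ z ω' ∂ℙ| ≤ M := by
      simpa using norm_integral_le_of_norm_le_const (μ := ℙ) (f := φ z)
        (ae_of_all _ (hM z))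
    exact (abs_sub _ _).trans (add_le_add (hM z ω) hmean_le)
  · rw [integral_centered_mul_orbit (φ := φ) (fun z => hφ.comp measurable_prodMk_left) hM]
    exact hC x z₁ z₂

end Mixing

section Truncation

variable {Ω : Type*} {Λ : Ω → ℝ}

/-- The amount by which `Λ` exceeds the level `n`. -/
def excess (Λ : Ω → ℝ) (n : ℝ) (ω : Ω) : ℝ≥0∞ := ENNReal.ofReal (Λ ω - n)

lemma antitone_excess (Λ : Ω → ℝ) : Antitone (excess Λ) := fun _ _ hmn _ =>
  ENNReal.ofReal_le_ofReal (sub_le_sub_left hmn _)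

lemma enorm_sub_min_le_excess {v n : ℝ} {ω₁ ω₂ : Ω} (hv : v ≤ Λ ω₁ + Λ ω₂) :
    ‖v - min v (2 * n)‖ₑ ≤ excess Λ n ω₁ + excess Λ n ω₂ := by
  have hmax : v - min v (2 * n) = max (v - 2 * n) 0 := by
    rw [← max_sub_sub_left, sub_self, max_comm]
  rw [hmax, Real.enorm_of_nonneg (le_max_right _ _), ENNReal.ofReal_max, ENNReal.ofReal_zero,
    max_eq_left zero_le]
  exact (ENNReal.ofReal_le_ofReal (by linarith)).trans ENNReal.ofReal_add_le

variable [MeasurableSpace Ω] {ℙ : Measure Ω}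

lemma measurable_excess (hΛ : Measurable Λ) (n : ℝ) : Measurable (excess Λ n) :=
  (hΛ.sub_const n).ennreal_ofReal

lemma tendsto_lintegral_excess (hΛ : Measurable Λ) (hΛi : Integrable Λ ℙ) :
    Tendsto (fun n => ∫⁻ ω, excess Λ n ω ∂ℙ) atTop (𝓝 0) := by
  have hlim := tendsto_lintegral_filter_of_dominated_convergence (μ := ℙ) (l := atTop)
    (F := excess Λ) (f := fun _ => 0) (fun ω => ‖Λ ω‖ₑ)
    (Eventually.of_forall (measurable_excess hΛ)) ?_ hΛi.2.ne (ae_of_all _ fun ω => ?_)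
  · simpa only [lintegral_zero] using hlim
  · filter_upwards [eventually_ge_atTop 0] with n hn
    exact ae_of_all _ fun ω => (ENNReal.ofReal_le_ofReal (sub_le_self _ hn)).trans
      (Real.ofReal_le_enorm _)
  · refine tendsto_const_nhds.congr' ?_
    filter_upwards [eventually_ge_atTop (Λ ω)] with n hn
    exact (ENNReal.ofReal_of_nonpos (sub_nonpos.2 hn)).symm

variable {E : Type*} [NormedAddCommGroup E] [MeasurableSpace E] [AddAction E Ω]
  [MeasurableVAdd₂ E Ω] {ν : E → Ω → ℝ}

section Expectation

variable [VAddInvariantMeasure E Ω ℙ]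

lemma integrable_of_le_orbit (hν : ∀ z, Measurable (ν z)) (hν0 : ∀ z ω, 0 ≤ ν z ω)
    (hΛi : Integrable Λ ℙ) {z : E} (hνΛ : ∀ᵐ ω ∂ℙ, ν z ω ≤ Λ ω + Λ (z +ᵥ ω)) :
    Integrable (ν z) ℙ := by
  have hshift := (measurePreserving_vadd z ℙ).integrable_comp_of_integrable hΛi
  refine (hΛi.add hshift).mono' (hν z).aestronglyMeasurable (hνΛ.mono fun ω hω => ?_)
  rwa [Real.norm_of_nonneg (hν0 z ω)]

lemma abs_integral_le_of_le_orbit (hν0 : ∀ z ω, 0 ≤ ν z ω) (hΛi : Integrable Λ ℙ) {z : E}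
    (hνΛ : ∀ᵐ ω ∂ℙ, ν z ω ≤ Λ ω + Λ (z +ᵥ ω)) :
    |∫ ω, ν z ω ∂ℙ| ≤ 2 * ∫ ω, Λ ω ∂ℙ := by
  have hshift := measurePreserving_vadd z ℙ
  have hΛz : Integrable (fun ω => Λ (z +ᵥ ω)) ℙ := hshift.integrable_comp_of_integrable hΛi
  calc |∫ ω, ν z ω ∂ℙ| = ∫ ω, ν z ω ∂ℙ := abs_of_nonneg (integral_nonneg (hν0 z))
    _ ≤ ∫ ω, (Λ ω + Λ (z +ᵥ ω)) ∂ℙ :=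
        integral_mono_of_nonneg (ae_of_all _ (hν0 z)) (hΛi.add hΛz) hνΛ
    _ = 2 * ∫ ω, Λ ω ∂ℙ := by
        rw [integral_add hΛi hΛz, hshift.integral_comp (measurableEmbedding_const_vadd z) Λ,
          two_mul]

lemma enorm_integral_sub_integral_min_le [IsFiniteMeasure ℙ] (hν : ∀ z, Measurable (ν z))
    (hν0 : ∀ z ω, 0 ≤ ν z ω) (hΛ : Measurable Λ) (hΛi : Integrable Λ ℙ) {z : E}
    (hνΛ : ∀ᵐ ω ∂ℙ, ν z ω ≤ Λ ω + Λ (z +ᵥ ω)) (n : ℝ) :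
    ‖(∫ ω, ν z ω ∂ℙ) - ∫ ω, min (ν z ω) (2 * n) ∂ℙ‖ₑ ≤ 2 * ∫⁻ ω, excess Λ n ω ∂ℙ := by
  have hνi := integrable_of_le_orbit hν hν0 hΛi hνΛ
  have hmini : Integrable (fun ω => min (ν z ω) (2 * n)) ℙ := hνi.inf (integrable_const _)
  rw [← integral_sub hνi hmini]
  calc _ ≤ ∫⁻ ω, ‖ν z ω - min (ν z ω) (2 * n)‖ₑ ∂ℙ := enorm_integral_le_lintegral_enorm _
    _ ≤ ∫⁻ ω, (excess Λ n ω + excess Λ n (z +ᵥ ω)) ∂ℙ :=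
        lintegral_mono_ae (hνΛ.mono fun ω hω => enorm_sub_min_le_excess hω)
    _ = 2 * ∫⁻ ω, excess Λ n ω ∂ℙ := by
        rw [lintegral_add_left (measurable_excess hΛ n),
          (measurePreserving_vadd z ℙ).lintegral_comp (measurable_excess hΛ n), two_mul]

end Expectation

variable [NormedSpace ℝ E] [FiniteDimensional ℝ E] [BorelSpace E] {μ : Measure E}
  [μ.IsAddHaarMeasure]

lemma setLIntegral_enorm_sub_min_orbit_le (hΛ : Measurable Λ) {ω : Ω}
    (hω : ∀ x z : E, ν z (x +ᵥ ω) ≤ Λ (x +ᵥ ω) + Λ ((x + z) +ᵥ ω)) (n : ℝ) {R ε : ℝ}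
    (hε : 0 < ε) (hεR : ε ≤ R) :
    ∫⁻ q in closedBall (0 : E × E) R, ‖ν (ε⁻¹ • q).2 ((ε⁻¹ • q).1 +ᵥ ω) -
        min (ν (ε⁻¹ • q).2 ((ε⁻¹ • q).1 +ᵥ ω)) (2 * n)‖ₑ ∂(μ.prod μ) ≤
      2 * μ (closedBall (0 : E) R) * (2 ^ Module.finrank ℝ E * μ (closedBall (0 : E) (2 * R))) *
        dyadicMaximal μ (excess Λ n) ω :=
  (lintegral_mono fun q => (smul_add ε⁻¹ q.1 q.2).symm ▸ enorm_sub_min_le_excess (hω _ _)).trans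
    (setLIntegral_prod_orbit_inv_smul_le (measurable_excess hΛ n) ω hε hεR)

lemma locallyIntegrable_orbit_prod (hν : Measurable (Function.uncurry ν))
    (hν0 : ∀ z ω, 0 ≤ ν z ω) (hΛ : Measurable Λ) {ω : Ω}
    (hω : ∀ x z : E, ν z (x +ᵥ ω) ≤ Λ (x +ᵥ ω) + Λ ((x + z) +ᵥ ω)) {n : ℝ} (hn : 0 ≤ n)
    (hmax : dyadicMaximal μ (excess Λ n) ω < ∞) :
    LocallyIntegrable (fun q : E × E => ν q.2 (q.1 +ᵥ ω)) (μ.prod μ) := by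
  have hmeas := measurable_orbit_prod hν ω
  have hmin : LocallyIntegrable (fun q : E × E => min (ν q.2 (q.1 +ᵥ ω)) (2 * n)) (μ.prod μ) :=
    locallyIntegrable_of_abs_le (hmeas.min measurable_const) (M := 2 * n) fun q => by
      rw [abs_of_nonneg (le_min (hν0 _ _) (by positivity))]
      exact min_le_right _ _
  have hsub : LocallyIntegrable
      (fun q : E × E => ν q.2 (q.1 +ᵥ ω) - min (ν q.2 (q.1 +ᵥ ω)) (2 * n)) (μ.prod μ) := fun q =>
    ⟨closedBall 0 (‖q‖ + 1), closedBall_mem_nhds_of_mem (by simp),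
      (hmeas.sub (hmeas.min measurable_const)).aestronglyMeasurable, by
        have hbound := setLIntegral_enorm_sub_min_orbit_le (μ := μ) hΛ hω n one_pos
          (le_add_of_nonneg_left (norm_nonneg q))
        simp only [inv_one, one_smul] at hbound
        have := measure_closedBall_lt_top (μ := μ) (x := 0) (r := ‖q‖ + 1)
        have := measure_closedBall_lt_top (μ := μ) (x := 0) (r := 2 * (‖q‖ + 1))
        exact hbound.trans_lt (by finiteness)⟩
  exact (hmin.add hsub).congr (ae_of_all _ fun q => add_sub_cancel _ _)

end Truncation

section Homogenization

variable {E : Type*} [NormedAddCommGroup E] [NormedSpace ℝ E] [FiniteDimensional ℝ E]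
  [MeasurableSpace E] [BorelSpace E] {μ : Measure E} [μ.IsAddHaarMeasure]

lemma HasScalingLimit.of_truncations {K : E × E → ℝ} {e ν' : E → ℝ} {Kn : ℕ → E × E → ℝ}
    {en : ℕ → E → ℝ} {A B : ℕ → ℝ≥0∞} {C : ℝ → ℝ≥0∞}
    (hK : LocallyIntegrable K (μ.prod μ)) (he : LocallyIntegrable e μ)
    (hν' : LocallyIntegrable ν' μ) (hlim : HasScalingLimit μ e ν')
    (hKn : ∀ n, LocallyIntegrable (fun q : E × E => Kn n q - en n q.2) (μ.prod μ))
    (hlimn : ∀ n, HasScalingLimit (μ.prod μ) (fun q => Kn n q - en n q.2) fun _ => 0)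
    (hA : Tendsto A atTop (𝓝 0)) (hen : ∀ n z, ‖e z - en n z‖ₑ ≤ A n)
    (hB : Tendsto B atTop (𝓝 0)) (hC : ∀ R, C R ≠ ∞)
    (hKKn : ∀ n R ε, 0 < ε → ε ≤ R → ∫⁻ q in closedBall (0 : E × E) R,
      ‖K (ε⁻¹ • q) - Kn n (ε⁻¹ • q)‖ₑ ∂(μ.prod μ) ≤ C R * B n) :
    HasScalingLimit (μ.prod μ) K fun q => ν' q.2 := by
  have hesnd : LocallyIntegrable (fun q : E × E => e q.2) (μ.prod μ) :=
    locallyIntegrable_comp_snd he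
  refine .of_approx hK fun R δ hR hδ => ?_
  have herr : Tendsto (fun n => C R * B n + A n * (μ.prod μ) (closedBall (0 : E × E) R)) atTop
      (𝓝 0) := by
    simpa using (ENNReal.Tendsto.const_mul hB (Or.inr (hC R))).add
      (ENNReal.Tendsto.mul_const hA (Or.inr measure_closedBall_lt_top.ne))
  obtain ⟨n, hn⟩ := (herr.eventually (ge_mem_nhds (ENNReal.ofReal_pos.2 hδ))).exists
  refine ⟨fun q => (Kn n q - en n q.2) + e q.2, (hKn n).add hesnd, ?_, ?_⟩
  · simpa using (hlimn n).add (hlim.comp_snd (μ' := μ) he hν') (hKn n) hesnd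
      (locallyIntegrable_const 0) (locallyIntegrable_comp_snd hν')
  filter_upwards [Ioc_mem_nhdsGT hR] with ε hε
  refine le_trans ?_ hn
  calc _ ≤ ∫⁻ q in closedBall (0 : E × E) R,
        (‖K (ε⁻¹ • q) - Kn n (ε⁻¹ • q)‖ₑ + A n) ∂(μ.prod μ) := lintegral_mono fun q => by
        rw [show K (ε⁻¹ • q) - (Kn n (ε⁻¹ • q) - en n (ε⁻¹ • q).2 + e (ε⁻¹ • q).2) =
          (K (ε⁻¹ • q) - Kn n (ε⁻¹ • q)) - (e (ε⁻¹ • q).2 - en n (ε⁻¹ • q).2) by ring]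
        exact enorm_sub_le.trans (add_le_add_right (hen n _) _)
    _ ≤ C R * B n + A n * (μ.prod μ) (closedBall (0 : E × E) R) := by
        rw [lintegral_add_right _ measurable_const, setLIntegral_const]
        exact add_le_add_left (hKKn n R ε hε.1 hε.2) _

variable {Ω : Type*} [MeasurableSpace Ω] {ℙ : Measure Ω} [IsProbabilityMeasure ℙ]
  [AddAction E Ω] [MeasurableVAdd₂ E Ω] [VAddInvariantMeasure E Ω ℙ] {ν : E → Ω → ℝ} {Λ : Ω → ℝ}
  {ν' : E → ℝ}

lemma HasPolynomialMixing.ae_hasScalingLimit_min_zero [Nontrivial E] {l n : ℝ}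
    (h : HasPolynomialMixing ℙ l fun z ω => min (ν z ω) n) (hl : 0 < l) (hn : 0 < n)
    (hν : Measurable (Function.uncurry ν)) (hν0 : ∀ z ω, 0 ≤ ν z ω) :
    ∀ᵐ ω ∂ℙ,
      LocallyIntegrable
        (fun q : E × E => min (ν q.2 (q.1 +ᵥ ω)) n - ∫ ω', min (ν q.2 ω') n ∂ℙ) (μ.prod μ) ∧
      HasScalingLimit (μ.prod μ)
        (fun q => min (ν q.2 (q.1 +ᵥ ω)) n - ∫ ω', min (ν q.2 ω') n ∂ℙ) fun _ => 0 := by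
  have hmin : ∀ z ω, |min (ν z ω) n| ≤ n := fun z ω => by
    rw [abs_of_nonneg (le_min (hν0 z ω) hn.le)]
    exact min_le_right _ _
  have hmeas : Measurable fun p : E × Ω => min (ν p.1 p.2) n := hν.min measurable_const
  have hmean : Measurable fun z => ∫ ω, min (ν z ω) n ∂ℙ :=
    hmeas.stronglyMeasurable.integral_prod_right'.measurable
  have hmean_le : ∀ z, |∫ ω, min (ν z ω) n ∂ℙ| ≤ n := fun z => by
    simpa using norm_integral_le_of_norm_le_const (μ := ℙ) (f := fun ω => min (ν z ω) n)
      (ae_of_all _ (hmin z))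
  filter_upwards [h.ae_hasScalingLimit_zero (μ := μ) hl hmeas hmin] with ω hω
  have horbit : LocallyIntegrable (fun q : E × E => min (ν q.2 (q.1 +ᵥ ω)) n) (μ.prod μ) :=
    locallyIntegrable_of_abs_le ((measurable_orbit_prod hν ω).min measurable_const)
      fun q => hmin _ _
  exact ⟨horbit.sub (locallyIntegrable_comp_snd (locallyIntegrable_of_abs_le hmean hmean_le)), hω⟩

theorem ae_hasScalingLimit_orbit [Nontrivial E] {l : ℝ} (hl : 0 < l)
    (hν : Measurable (Function.uncurry ν)) (hν0 : ∀ z ω, 0 ≤ ν z ω)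
    (hmix : ∀ n : ℝ, 0 < n → HasPolynomialMixing ℙ l fun z ω => min (ν z ω) n)
    (hν' : Measurable ν') (hν'0 : ∀ z, 0 ≤ ν' z)
    (hconv : HasScalingLimit μ (fun z => ∫ ω, ν z ω ∂ℙ) ν')
    (hΛ : Measurable Λ) (hΛi : Integrable Λ ℙ)
    (hνΛ : ∀ᵐ ω ∂ℙ, ∀ x z : E, ν z (x +ᵥ ω) ≤ Λ (x +ᵥ ω) + Λ ((x + z) +ᵥ ω)) :
    ∀ᵐ ω ∂ℙ, LocallyIntegrable (fun q : E × E => ν q.2 (q.1 +ᵥ ω)) (μ.prod μ) ∧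
      LocallyIntegrable ν' μ ∧
      HasScalingLimit (μ.prod μ) (fun q => ν q.2 (q.1 +ᵥ ω)) fun q => ν' q.2 := by
  have hlevel : ∀ N : ℕ, (0 : ℝ) < N + 1 := fun N => by positivity
  have hνz : ∀ z, Measurable (ν z) := fun z => hν.comp measurable_prodMk_left
  have hνΛz : ∀ z, ∀ᵐ ω ∂ℙ, ν z ω ≤ Λ ω + Λ (z +ᵥ ω) := fun z =>
    hνΛ.mono fun ω hω => by simpa using hω 0 z
  have hmean : LocallyIntegrable (fun z => ∫ ω, ν z ω ∂ℙ) μ :=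
    locallyIntegrable_of_abs_le hν.stronglyMeasurable.integral_prod_right'.measurable
      fun z => abs_integral_le_of_le_orbit hν0 hΛi (hνΛz z)
  have hν'i := hconv.locallyIntegrable hmean (fun z => integral_nonneg (hν0 z)) hν' hν'0
  have hexcess : Tendsto (fun N : ℕ => ∫⁻ ω, excess Λ (N + 1) ω ∂ℙ) atTop (𝓝 0) :=
    (tendsto_lintegral_excess hΛ hΛi).comp
      (tendsto_atTop_add_const_right _ 1 tendsto_natCast_atTop_atTop)
  have hmax := ae_tendsto_dyadicMaximal_zero (μ := μ) (ℙ := ℙ)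
    (X := fun N : ℕ => excess Λ (N + 1)) (fun N => measurable_excess hΛ _)
    (fun M N hMN => antitone_excess Λ (by gcongr)) hexcess
  have htrunc := ae_all_iff.2 fun N : ℕ => (hmix (2 * (N + 1)) (mul_pos two_pos
    (hlevel N))).ae_hasScalingLimit_min_zero (μ := μ) hl (mul_pos two_pos (hlevel N)) hν hν0
  filter_upwards [hνΛ, hmax, htrunc] with ω hω hmaxω htruncω
  obtain ⟨N, hN⟩ := (hmaxω.eventually_lt_const ENNReal.zero_lt_top).exists
  have hK := locallyIntegrable_orbit_prod hν hν0 hΛ hω (hlevel N).le hN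
  refine ⟨hK, hν'i, .of_truncations hK hmean hν'i hconv (fun N => (htruncω N).1)
    (fun N => (htruncω N).2) (A := fun N => 2 * ∫⁻ ω, excess Λ (N + 1) ω ∂ℙ) ?_
    (fun N z => enorm_integral_sub_integral_min_le hνz hν0 hΛ hΛi (hνΛz z) _) hmaxω
    (C := fun R => 2 * μ (closedBall (0 : E) R) *
      (2 ^ Module.finrank ℝ E * μ (closedBall (0 : E) (2 * R)))) (fun R => ?_)
    fun N R ε hε hεR => setLIntegral_enorm_sub_min_orbit_le hΛ hω _ hε hεR⟩
  · simpa using ENNReal.Tendsto.const_mul hexcess (Or.inr ENNReal.ofNat_ne_top)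
  · have := measure_closedBall_lt_top (μ := μ) (x := 0) (r := R)
    have := measure_closedBall_lt_top (μ := μ) (x := 0) (r := 2 * R)
    finiteness

end Homogenization

section SymmetrizedCoefficient

variable {E : Type*} [NormedAddCommGroup E] [NormedSpace ℝ E]

variable (E) in
/-- The involution `(x, z) ↦ (x + z, -z)`, which reverses the jump from `x` to `x + z`. -/
def jumpReversal : (E × E) ≃L[ℝ] (E × E) :=
  let S : E × E →L[ℝ] E × E :=
    (ContinuousLinearMap.fst ℝ E E + ContinuousLinearMap.snd ℝ E E).prod
      (-ContinuousLinearMap.snd ℝ E E)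
  .equivOfInverse S S (fun q => by simp [S]) (fun q => by simp [S])

lemma jumpReversal_apply (q : E × E) : jumpReversal E q = (q.1 + q.2, -q.2) := rfl

variable [FiniteDimensional ℝ E] [MeasurableSpace E] [BorelSpace E] {μ : Measure E}
  [μ.IsAddHaarMeasure]

lemma measurePreserving_jumpReversal :
    MeasurePreserving (jumpReversal E) (μ.prod μ) (μ.prod μ) :=
  (measurePreserving_add_prod_neg μ μ).comp (Measure.measurePreserving_swap (μ := μ) (ν := μ))

variable {Ω : Type*} [MeasurableSpace Ω] {ℙ : Measure Ω} [IsProbabilityMeasure ℙ]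
  [AddAction E Ω] [MeasurableVAdd₂ E Ω] [VAddInvariantMeasure E Ω ℙ] {ν : E → Ω → ℝ} {Λ : Ω → ℝ}
  {ν' : E → ℝ} {κ : E → E → Ω → ℝ}

theorem ae_hasScalingLimit_coefficient [Nontrivial E]
    (hκν : ∀ᵐ ω ∂ℙ, ∀ x y : E, κ x y ω = ν (y - x) (x +ᵥ ω) + ν (x - y) (y +ᵥ ω))
    (hν : Measurable (Function.uncurry ν)) (hν0 : ∀ z ω, 0 ≤ ν z ω) {l : ℝ} (hl : 0 < l)
    (hmix : ∀ n : ℝ, 0 < n → HasPolynomialMixing ℙ l fun z ω => min (ν z ω) n)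
    (hν' : Measurable ν') (hν'0 : ∀ z, 0 ≤ ν' z)
    (hconv : HasScalingLimit μ (fun z => ∫ ω, ν z ω ∂ℙ) ν')
    (hΛ : Measurable Λ) (hΛi : Integrable Λ ℙ)
    (hκΛ : ∀ᵐ ω ∂ℙ, ∀ x y : E, κ x y ω ≤ Λ (x +ᵥ ω) + Λ (y +ᵥ ω)) :
    ∀ᵐ ω ∂ℙ, HasScalingLimit (μ.prod μ) (fun q : E × E => κ q.1 (q.1 + q.2) ω)
      fun q => ν' q.2 + ν' (-q.2) := by
  have hνΛ : ∀ᵐ ω ∂ℙ, ∀ x z : E, ν z (x +ᵥ ω) ≤ Λ (x +ᵥ ω) + Λ ((x + z) +ᵥ ω) := by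
    filter_upwards [hκν, hκΛ] with ω hκνω hκΛω x z
    have hκxz := hκνω x (x + z)
    rw [add_sub_cancel_left] at hκxz
    linarith [hκΛω x (x + z), hν0 (x - (x + z)) ((x + z) +ᵥ ω)]
  filter_upwards [hκν, ae_hasScalingLimit_orbit hl hν hν0 hmix hν' hν'0 hconv hΛ hΛi hνΛ]
    with ω hκνω ⟨hνi, hν'i, hlim⟩
  have hsymm := hlim.add_comp_linearEquiv hνi (locallyIntegrable_comp_snd hν'i) (jumpReversal E)
    measurePreserving_jumpReversal
  simpa only [jumpReversal_apply, hκνω, add_sub_cancel_left, sub_add_cancel_left] using hsymm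

end SymmetrizedCoefficient

section TruncatedForm

lemma inv_rpow_le_rpow_neg_abs {η t : ℝ} (hη : 0 < η) (hηt : η ≤ t) (htη : t ≤ 1 / η) (β : ℝ) :
    (t ^ β)⁻¹ ≤ η ^ (-|β|) := by
  have ht : 0 < t := hη.trans_le hηt
  rw [← Real.rpow_neg ht.le]
  obtain hβ | hβ := le_total 0 β
  · rw [abs_of_nonneg hβ]
    exact Real.rpow_le_rpow_of_nonpos hη hηt (neg_nonpos.2 hβ)
  · rw [abs_of_nonpos hβ, Real.rpow_neg hη.le, ← Real.inv_rpow hη.le, ← one_div]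
    exact Real.rpow_le_rpow ht.le htη (neg_nonneg.2 hβ)

variable {E : Type*} [NormedAddCommGroup E] {Γ : Set E} {η β : ℝ} {f g : E → ℝ}

/-- The pairs `(x, z)` of a position and a jump `z ∈ Γ` of size between `η` and `1 / η`. -/
def truncatedJumps (Γ : Set E) (η : ℝ) : Set (E × E) :=
  {q | η < ‖q.2‖ ∧ ‖q.2‖ < 1 / η ∧ q.2 ∈ Γ}

/-- The integrand of the bilinear form of order `β` in the coordinates `(x, z)`, with unit
coefficient. -/
def formIntegrand (β : ℝ) (f g : E → ℝ) (q : E × E) : ℝ :=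
  (f (q.1 + q.2) - f q.1) * (g (q.1 + q.2) - g q.1) / ‖q.2‖ ^ β

lemma norm_le_of_formIntegrand_ne_zero {R : ℝ} (hR : ∀ x, R ≤ ‖x‖ → g x = 0) {q : E × E}
    (hq : formIntegrand β f g q ≠ 0) : ‖q.1‖ ≤ R + ‖q.2‖ := by
  by_contra! hfar
  have hx : g q.1 = 0 := hR _ (by linarith [norm_nonneg q.2])
  have hxz : g (q.1 + q.2) = 0 := hR _ (by linarith [norm_sub_le_norm_add q.1 q.2])
  exact hq (by simp [formIntegrand, hx, hxz])

lemma abs_formIntegrand_le {Mf Mg : ℝ} (hη : 0 < η) {q : E × E} (hq : q ∈ truncatedJumps Γ η)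
    (hfx : |f q.1| ≤ Mf) (hfxz : |f (q.1 + q.2)| ≤ Mf) (hg : ∀ x, |g x| ≤ Mg) :
    |formIntegrand β f g q| ≤ (Mf + Mf) * (Mg + Mg) * η ^ (-|β|) := by
  have hMf : 0 ≤ Mf := (abs_nonneg _).trans hfx
  have hMg : 0 ≤ Mg := (abs_nonneg _).trans (hg 0)
  have hdf : |f (q.1 + q.2) - f q.1| ≤ Mf + Mf := (abs_sub _ _).trans (add_le_add hfxz hfx)
  have hdg : |g (q.1 + q.2) - g q.1| ≤ Mg + Mg :=
    (abs_sub _ _).trans (add_le_add (hg _) (hg _))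
  rw [formIntegrand, div_eq_mul_inv, abs_mul, abs_mul,
    abs_of_nonneg (inv_nonneg.2 (Real.rpow_nonneg (norm_nonneg q.2) β))]
  gcongr
  exact inv_rpow_le_rpow_neg_abs hη hq.1.le hq.2.1.le β

variable [MeasurableSpace E] [BorelSpace E]

lemma measurableSet_truncatedJumps (hΓ : MeasurableSet Γ) (η : ℝ) :
    MeasurableSet (truncatedJumps Γ η) :=
  (measurableSet_lt measurable_const measurable_snd.norm).inter
    ((measurableSet_lt measurable_snd.norm measurable_const).inter (measurable_snd hΓ))

variable [NormedSpace ℝ E] [FiniteDimensional ℝ E]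

lemma isTestFunction_indicator_formIntegrand (hΓ : MeasurableSet Γ) (hη : 0 < η) (β : ℝ)
    (hf : Measurable f) (hfb : ∀ R : ℝ, 0 < R → ∃ M, ∀ x ∈ ball (0 : E) R, |f x| ≤ M)
    (hg : IsTestFunction g) :
    IsTestFunction ((truncatedJumps Γ η).indicator (formIntegrand β f g)) := by
  have : ProperSpace E := FiniteDimensional.proper ℝ E
  obtain ⟨R, hR0, hR⟩ := hg.hasCompactSupport.exists_pos_le_norm
  obtain ⟨Mg, hMg⟩ := hg.bounded
  obtain ⟨Mf, hMf⟩ := hfb (R + 1 / η + 1 / η) (by positivity)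
  have hball : ∀ q ∈ truncatedJumps Γ η, formIntegrand β f g q ≠ 0 →
      ‖q.1‖ < R + 1 / η ∧ ‖q.1 + q.2‖ < R + 1 / η + 1 / η := fun q hq hne => by
    have hx := norm_le_of_formIntegrand_ne_zero hR hne
    constructor <;> linarith [norm_add_le q.1 q.2, hq.2.1]
  have hgm := hg.measurable
  refine ⟨Measurable.indicator (by unfold formIntegrand; fun_prop)
    (measurableSet_truncatedJumps hΓ η), ⟨(Mf + Mf) * (Mg + Mg) * η ^ (-|β|), fun q => ?_⟩,
    HasCompactSupport.intro (isCompact_closedBall (0 : E × E) (R + 1 / η)) fun q hqR => ?_⟩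
  · have hMf0 : 0 ≤ Mf := (abs_nonneg _).trans (hMf 0 (mem_ball_self (by positivity)))
    have hMg0 : 0 ≤ Mg := (abs_nonneg _).trans (hMg 0)
    have hbound0 : |(0 : ℝ)| ≤ (Mf + Mf) * (Mg + Mg) * η ^ (-|β|) := by
      rw [abs_zero]
      positivity
    by_cases hq : q ∈ truncatedJumps Γ η; swap
    · rwa [indicator_of_notMem hq]
    rw [indicator_of_mem hq]
    by_cases hne : formIntegrand β f g q = 0
    · rwa [hne]
    obtain ⟨hx, hxz⟩ := hball q hq hne
    have hη' : 0 < 1 / η := by positivity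
    exact abs_formIntegrand_le hη hq (hMf _ (by rw [mem_ball_zero_iff]; linarith))
      (hMf _ (mem_ball_zero_iff.2 hxz)) hMg
  · refine indicator_apply_eq_zero.2 fun hq => of_not_not fun hne => hqR ?_
    exact mem_closedBall_zero_iff.2 (norm_prod_le_iff.2
      ⟨(hball q hq hne).1.le, hq.2.1.le.trans (le_add_of_nonneg_left hR0.le)⟩)

lemma HasScalingLimit.tendsto_truncatedForm {μ : Measure E} {k k' : E × E → ℝ}
    (h : HasScalingLimit (μ.prod μ) k k') (hΓ : MeasurableSet Γ) (hη : 0 < η) (β : ℝ)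
    (hf : Measurable f) (hfb : ∀ R : ℝ, 0 < R → ∃ M, ∀ x ∈ ball (0 : E) R, |f x| ≤ M)
    (hg : IsTestFunction g) :
    Tendsto
      (fun ε : ℝ => ∫ q in truncatedJumps Γ η, formIntegrand β f g q * k (ε⁻¹ • q) ∂(μ.prod μ))
      (𝓝[>] 0) (𝓝 (∫ q in truncatedJumps Γ η, formIntegrand β f g q * k' q ∂(μ.prod μ))) := by
  simpa only [integral_indicator_mul (measurableSet_truncatedJumps hΓ η)] using
    h _ (isTestFunction_indicator_formIntegrand hΓ hη β hf hfb hg)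

variable {Ω : Type*} [MeasurableSpace Ω]

theorem truncated_form_convergence_summation_general [Nontrivial E] (μ : Measure E)
    [μ.IsAddHaarMeasure] (ℙ : Measure Ω) [IsProbabilityMeasure ℙ] [AddAction E Ω]
    [MeasurableVAdd₂ E Ω] [VAddInvariantMeasure E Ω ℙ] (hΓ : MeasurableSet Γ) (β : ℝ)
    {κ : E → E → Ω → ℝ} {ν : E → Ω → ℝ}
    (hκν : ∀ᵐ ω ∂ℙ, ∀ x y : E, κ x y ω = ν (y - x) (x +ᵥ ω) + ν (x - y) (y +ᵥ ω))
    (hν : Measurable (Function.uncurry ν)) (hν0 : ∀ z ω, 0 ≤ ν z ω) {l : ℝ} (hl : 0 < l)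
    (hmix : ∀ n : ℝ, 0 < n → HasPolynomialMixing ℙ l fun z ω => min (ν z ω) n)
    {ν' : E → ℝ} (hν' : Measurable ν') (hν'0 : ∀ z, 0 ≤ ν' z)
    (hconv : HasScalingLimit μ (fun z => ∫ ω, ν z ω ∂ℙ) ν')
    {Λ : Ω → ℝ} (hΛ : Measurable Λ) (hΛi : Integrable Λ ℙ)
    (hκΛ : ∀ᵐ ω ∂ℙ, ∀ x y : E, κ x y ω ≤ Λ (x +ᵥ ω) + Λ (y +ᵥ ω)) :
    ∀ᵐ ω ∂ℙ, ∀ η : ℝ, 0 < η → ∀ f : E → ℝ, Measurable f →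
      (∀ R : ℝ, 0 < R → ∃ M, ∀ x ∈ ball (0 : E) R, |f x| ≤ M) →
      ∀ g : E → ℝ, IsTestFunction g →
      Tendsto (fun ε : ℝ => ∫ q in truncatedJumps Γ η,
          formIntegrand β f g q * κ (ε⁻¹ • q.1) (ε⁻¹ • (q.1 + q.2)) ω ∂(μ.prod μ))
        (𝓝[>] 0)
        (𝓝 (∫ q in truncatedJumps Γ η,
          formIntegrand β f g q * (ν' q.2 + ν' (-q.2)) ∂(μ.prod μ))) := by
  filter_upwards [ae_hasScalingLimit_coefficient (μ := μ) hκν hν hν0 hl hmix hν' hν'0 hconv hΛ hΛi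
    hκΛ] with ω hω η hη f hf hfb g hg
  simpa only [Prod.smul_fst, Prod.smul_snd, ← smul_add] using
    hω.tendsto_truncatedForm hΓ hη β hf hfb hg

end TruncatedForm

section Flow

variable {Ω : Type*}

/-- The action on `Ω` of a group of transformations `τ`. -/
abbrev flowAction {E : Type*} [AddMonoid E] (τ : E → Ω → Ω) (hτ0 : τ 0 = id)
    (hτadd : ∀ x y, τ x ∘ τ y = τ (x + y)) : AddAction E Ω where
  vadd := τ
  zero_vadd := congrFun hτ0
  add_vadd x y ω := (congrFun (hτadd x y) ω).symm

variable [MeasurableSpace Ω] {ℙ : Measure Ω}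

lemma integrable_of_integrable_rpow [IsFiniteMeasure ℙ] {X : Ω → ℝ} {p : ℝ} (hX : Measurable X)
    (hX0 : ∀ ω, 0 ≤ X ω) (hp : 1 ≤ p) (hXp : Integrable (fun ω => X ω ^ p) ℙ) :
    Integrable X ℙ := by
  refine ((integrable_const (1 : ℝ)).add hXp).mono' hX.aestronglyMeasurable
    (ae_of_all _ fun ω => ?_)
  rw [Real.norm_of_nonneg (hX0 ω), Pi.add_apply]
  obtain hle | hge := le_total (X ω) 1
  · exact hle.trans (le_add_of_nonneg_right (Real.rpow_nonneg (hX0 ω) p))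
  · exact (Real.self_le_rpow_of_one_le hge hp).trans (le_add_of_nonneg_left zero_le_one)

lemma exists_measurableSet_prob_eq_one_of_ae [IsProbabilityMeasure ℙ] {P : Ω → Prop}
    (h : ∀ᵐ ω ∂ℙ, P ω) : ∃ A, MeasurableSet A ∧ ℙ A = 1 ∧ ∀ ω ∈ A, P ω := by
  obtain ⟨A, hA, hAm, hAP⟩ := h.exists_measurable_mem
  exact ⟨A, hAm, (prob_compl_eq_zero_iff hAm).1 (mem_ae_iff.1 hA), hAP⟩

end Flow

/-- **Proposition 3.1(i)** (weak convergence of the truncated bilinear forms under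
assumption (A1) and a one-sided `p`-moment bound).  Almost surely, for every `η > 0`,
every locally bounded measurable `f` and every bounded measurable compactly supported
`g`, the truncated bilinear form with kernel `κ(x/ε, (x+z)/ε; ω)` converges, as
`ε → 0`, to the one with kernel `ν̄(z) + ν̄(-z)`. -/
theorem truncated_form_convergence_summation
    {Ω : Type*} [MeasurableSpace Ω] (ℙ : Measure Ω) [IsProbabilityMeasure ℙ]
    (d : ℕ) (hd : 0 < d) (α : ℝ) (hα0 : 0 < α) (hα2 : α < 2)
    -- the stationary ergodic group of transformations
    (τ : Rd d → Ω → Ω)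
    (hτ0 : τ 0 = id)
    (hτadd : ∀ x y, τ x ∘ τ y = τ (x + y))
    (hτmeas : Measurable fun p : Rd d × Ω => τ p.1 p.2)
    (hτstat : ∀ x, MeasurePreserving (τ x) ℙ ℙ)
    (hτerg : ∀ A : Set Ω, MeasurableSet A → (∀ x, τ x ⁻¹' A = A) → ℙ A = 0 ∨ ℙ A = 1)
    -- the symmetric cone
    (Γ : Set (Rd d)) (hΓopen : IsOpen Γ) (hΓne : Γ.Nonempty)
    (hΓcone : ∀ x ∈ Γ, ∀ r : ℝ, r ≠ 0 → r • x ∈ Γ)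
    -- the coefficient κ
    (κ : Rd d → Rd d → Ω → ℝ)
    (hκmeas : Measurable fun p : Rd d × Rd d × Ω => κ p.1 p.2.1 p.2.2)
    (hκnn : ∀ x y ω, 0 ≤ κ x y ω)
    (hκsym : ∀ x y ω, κ x y ω = κ y x ω)
    (hκshift : ∀ x y z ω, κ (x + z) (y + z) ω = κ x y (τ z ω))
    -- Assumption (A1): summation form
    (ν : Rd d → Ω → ℝ) (hνmeas : Measurable fun p : Rd d × Ω => ν p.1 p.2)
    (hνnn : ∀ z ω, 0 ≤ ν z ω)
    (hA1rep : ∀ᵐ ω ∂ℙ, ∀ x y : Rd d, κ x y ω = ν (y - x) (τ x ω) + ν (x - y) (τ y ω))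
    -- Assumption (A1)(i): polynomial mixing of the truncations ν ∧ n
    (l : ℝ) (hl : 0 < l)
    (hA1mix : ∀ n : ℝ, 0 < n → ∃ C : ℝ, 0 < C ∧ ∀ x z₁ z₂ : Rd d,
      |(∫ ω, min (ν z₁ ω) n * min (ν z₂ (τ x ω)) n ∂ℙ)
          - (∫ ω, min (ν z₁ ω) n ∂ℙ) * (∫ ω, min (ν z₂ ω) n ∂ℙ)| ≤ C ∧
      (x ≠ 0 → |(∫ ω, min (ν z₁ ω) n * min (ν z₂ (τ x ω)) n ∂ℙ)
          - (∫ ω, min (ν z₁ ω) n ∂ℙ) * (∫ ω, min (ν z₂ ω) n ∂ℙ)| ≤ C * ‖x‖ ^ (-l)))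
    -- Assumption (A1)(ii): weak convergence of z ↦ 𝔼[ν(z/ε;⬝)] to ν̄ = ν'
    (ν' : Rd d → ℝ) (hν'meas : Measurable ν') (hν'nn : ∀ z, 0 ≤ ν' z)
    (hA1conv : ∀ h : Rd d → ℝ, Measurable h → (∃ M, ∀ z, |h z| ≤ M) →
      HasCompactSupport h →
      Tendsto (fun ε : ℝ => ∫ z, h z * ∫ ω, ν (ε⁻¹ • z) ω ∂ℙ)
        (𝓝[>] (0 : ℝ)) (𝓝 (∫ z, h z * ν' z)))
    -- the one-sided moment bound: κ(x,y;ω) ≤ Λ(τ_x ω) + Λ(τ_y ω) with 𝔼[Λ^p] < ∞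
    (Λ : Ω → ℝ) (hΛmeas : Measurable Λ) (hΛnn : ∀ ω, 0 ≤ Λ ω)
    (p : ℝ) (hp : 1 < p) (hΛmom : Integrable (fun ω => Λ ω ^ p) ℙ)
    (hκbound : ∀ ω : Ω, ∀ x y : Rd d, κ x y ω ≤ Λ (τ x ω) + Λ (τ y ω)) :
    ∃ Ω₁ : Set Ω, MeasurableSet Ω₁ ∧ ℙ Ω₁ = 1 ∧
      ∀ ω ∈ Ω₁, ∀ η : ℝ, 0 < η →
      ∀ f : Rd d → ℝ, Measurable f →
        (∀ R : ℝ, 0 < R → ∃ M, ∀ x ∈ ball (0 : Rd d) R, |f x| ≤ M) →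
      ∀ g : Rd d → ℝ, Measurable g → (∃ M, ∀ x, |g x| ≤ M) → HasCompactSupport g →
      Tendsto (fun ε : ℝ =>
          ∫ q in {q : Rd d × Rd d | η < ‖q.2‖ ∧ ‖q.2‖ < 1 / η ∧ q.2 ∈ Γ},
            (f (q.1 + q.2) - f q.1) * (g (q.1 + q.2) - g q.1)
              / ‖q.2‖ ^ ((d : ℝ) + α)
              * κ (ε⁻¹ • q.1) (ε⁻¹ • (q.1 + q.2)) ω)
        (𝓝[>] (0 : ℝ))
        (𝓝 (∫ q in {q : Rd d × Rd d | η < ‖q.2‖ ∧ ‖q.2‖ < 1 / η ∧ q.2 ∈ Γ},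
            (f (q.1 + q.2) - f q.1) * (g (q.1 + q.2) - g q.1)
              / ‖q.2‖ ^ ((d : ℝ) + α)
              * (ν' q.2 + ν' (-q.2)))) := by
  let := flowAction τ hτ0 hτadd
  have : MeasurableVAdd₂ (Rd d) Ω := ⟨hτmeas⟩
  have : VAddInvariantMeasure (Rd d) Ω ℙ :=
    ⟨fun x _ hs => (hτstat x).measure_preimage hs.nullMeasurableSet⟩
  have : Nonempty (Fin d) := Fin.pos_iff_nonempty.1 hd
  have hΛi := integrable_of_integrable_rpow hΛmeas hΛnn hp.le hΛmom
  have hmix : ∀ n : ℝ, 0 < n → HasPolynomialMixing ℙ l fun z ω => min (ν z ω) n :=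
    fun n hn => (hA1mix n hn).imp fun _ hC => hC.2
  have hconv : HasScalingLimit volume (fun z => ∫ ω, ν z ω ∂ℙ) ν' :=
    fun F hF => hA1conv F hF.measurable hF.bounded hF.hasCompactSupport
  obtain ⟨Ω₁, hΩ₁, hprob, hlim⟩ := exists_measurableSet_prob_eq_one_of_ae <|
    truncated_form_convergence_summation_general volume ℙ hΓopen.measurableSet ((d : ℝ) + α)
      hA1rep hνmeas hνnn hl hmix hν'meas hν'nn hconv hΛmeas hΛi (ae_of_all _ hκbound)
  exact ⟨Ω₁, hΩ₁, hprob, fun ω hω η hη f hf hfb g hg hgb hgs =>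
    hlim ω hω η hη f hf hfb g ⟨hg, hgb, hgs⟩⟩

end
end
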